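/- arXiv:2503.11222 — 5 statements merged into one kernel-verified Lean document; each statement's English description precedes it below -/
import Mathlib

section
/- Let G=(V,w,μ,d) be a finite connected weighted graph with a general path distance which is Ollivier-Betti sharp, and set m=deg_max/2. Then there exist graph automorphisms φ₁,…,φ_m of G generating an abelian subgroup S=⟨φ₁,…,φ_m⟩ of the automorphism group of G such that G is graph-isomorphic to the Cayley graph Cay(S,{φ₁,…,φ_m}). -/
/-!
A sharp graph is rebuilt from its harmonic 1-forms, normed by `‖α‖ = max α(x,y) / d(x,y)` over the
oriented edges (`gauge`).

*Lines of extremal edges.* Cyclic sums of a form in `H1set` over cycles of `X₂` vanish. So for an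
edge from `x` to `y`, a point `z` in the ball of `x` and a point `z'` in the ball of `y`, the form
integrates along some geodesic from `z` to `z'` to the same value as along `z, x, y, z'`
(`geod_ball`): in effect a form has a local primitive on each pair of adjacent balls, and it is
Lipschitz for the distance with constant `‖α‖`. Non-negative curvature compares the Laplacians of
such primitives at the two ends of an edge where the Lipschitz bound is attained (`lap_le_local`).
As these Laplacians vanish, the bound has to be attained between the two balls at every neighbour
(`exists_pred`), and perturbing by a function that increases along extremal edges shows that
the extremal edges contain an infinite path (`not_wellFounded_tight`). Moving long extremal walks
from a vertex to its neighbours, one finds that a harmonic form attains its norm on an edge at every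
vertex (`exists_tight`).

*Labelling the edges.* The norm is a maximum of finitely many functionals, one for each oriented
edge, and a minimal such family consists of exposed functionals and contains a basis of the dual
space (`exists_exposed_basis`). A form exposing `u` attains its norm at every vertex, hence every
vertex has an edge whose functional is exactly `u` (`exists_edge_of_exposed`). If the dimension is
`m = deg_max / 2`, the `2 m` functionals `±uᵢ` use up all edges at every vertex. Moving along the
edge with functional `uᵢ` is then a permutation `φᵢ`, and the edges are exactly the pairs
`x, φᵢ x` (`exists_perms`).

*Commutation.* For the form dual to `uᵢ` the extremal edges are those labelled `i`. Applying
`exists_pred` to the edge from `x` to `φᵢ x` and the neighbour `φⱼ φᵢ x` yields a geodesic from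
`φⱼ x` to `φⱼ φᵢ x` made of edges labelled `i`, with the length of the edge from `x` to `φᵢ x`. Its
first edge, from `φⱼ x` to `φᵢ φⱼ x`, is therefore at most as long (`commute_aux`). Since `φⱼ` is a
bijection, the sums of these lengths over all vertices agree, so equality holds everywhere and
`φᵢ φⱼ x = φⱼ φᵢ x` (`commute`). Finally, a transitive abelian permutation group is regular
(`exists_cayley`).
-/

open Finset

namespace Paper

variable {V : Type*}

/-- Adjacency relation of a weighted graph: `x ∼ y` iff `w x y > 0`. -/
def Adj (w : V → V → ℝ) (x y : V) : Prop := 0 < w x y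

/-- The axioms of a weighted graph `(V, w, μ)`: `w` symmetric, nonnegative, vanishing on the
diagonal, and `μ` positive. -/
structure IsWeightedGraph (w : V → V → ℝ) (μ : V → ℝ) : Prop where
  symm : ∀ x y, w x y = w y x
  nonneg : ∀ x y, 0 ≤ w x y
  loopless : ∀ x, w x x = 0
  mu_pos : ∀ x, 0 < μ x

/-- Connectedness of the weighted graph. -/
def GraphConnected (w : V → V → ℝ) : Prop :=
  ∀ x y : V, ∃ (n : ℕ) (c : Fin (n + 1) → V), c 0 = x ∧ c (Fin.last n) = y ∧
    ∀ i : Fin n, Adj w (c i.castSucc) (c i.succ)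

/-- `d` is a general path distance for the graph with edge weight `w`:
symmetric, vanishing exactly on the diagonal, nonnegative, and equal to the infimum of the
lengths of paths joining the two points. -/
def IsPathDistance (w : V → V → ℝ) (d : V → V → ℝ) : Prop :=
  (∀ x y, d x y = d y x) ∧ (∀ x y, d x y = 0 ↔ x = y) ∧ (∀ x y, 0 ≤ d x y) ∧
  ∀ x y : V, IsGLB { s : ℝ |
      ∃ (n : ℕ) (c : Fin (n + 1) → V), c 0 = x ∧ c (Fin.last n) = y ∧
        (∀ i : Fin n, Adj w (c i.castSucc) (c i.succ)) ∧
        s = ∑ i : Fin n, d (c i.castSucc) (c i.succ) } (d x y)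

section Finite

variable [Fintype V]

/-- The (negative) graph Laplacian `Δ f (x) = ∑_y (w x y / μ x) (f y - f x)`. -/
noncomputable def lap (w : V → V → ℝ) (μ : V → ℝ) (f : V → ℝ) (x : V) : ℝ :=
  ∑ y, w x y / μ x * (f y - f x)

/-- The gradient `∇_{xy} f = (f x - f y)/d(x,y)`. -/
noncomputable def grad (d : V → V → ℝ) (f : V → ℝ) (x y : V) : ℝ := (f x - f y) / d x y

/-- The Lipschitz norm `‖∇ f‖_∞ = sup_{x ∼ y} |∇_{xy} f|`. -/
noncomputable def gradNorm (w d : V → V → ℝ) (f : V → ℝ) : ℝ :=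
  sSup { r : ℝ | ∃ x y, Adj w x y ∧ r = |grad d f x y| }

/-- The Ollivier curvature `κ(x,y) = inf {∇_{xy} Δ f : ∇_{yx} f = 1, ‖∇ f‖_∞ = 1}`. -/
noncomputable def kappa (w : V → V → ℝ) (μ : V → ℝ) (d : V → V → ℝ) (x y : V) : ℝ :=
  sInf { r : ℝ | ∃ f : V → ℝ, grad d f y x = 1 ∧ gradNorm w d f = 1 ∧
      r = grad d (lap w μ f) x y }

/-- Non-negative Ollivier curvature on every edge. -/
def NonnegCurv (w : V → V → ℝ) (μ : V → ℝ) (d : V → V → ℝ) : Prop :=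
  ∀ x y, Adj w x y → 0 ≤ kappa w μ d x y

/-- A cycle of length `n + 3`: an injective cyclic path along edges. -/
def IsCycle {n : ℕ} (w : V → V → ℝ) (c : ZMod (n + 3) → V) : Prop :=
  Function.Injective c ∧ ∀ i, Adj w (c i) (c (i + 1))

/-- Membership of a cycle in `X₂`: either a triangle, or
`d(x₀,x₃) < d(x₀,x₁)+d(x₁,x₂)+d(x₂,x₃)` and `x₃ ∼ … ∼ x_{n-1} ∼ x₀` is a geodesic. -/
def InX2 {n : ℕ} (w d : V → V → ℝ) (c : ZMod (n + 3) → V) : Prop :=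
  n = 0 ∨
    (d (c 0) (c 3) < d (c 0) (c 1) + d (c 1) (c 2) + d (c 2) (c 3) ∧
      ∑ i ∈ Finset.univ.filter (fun i : ZMod (n + 3) => i ≠ 0 ∧ i ≠ 1 ∧ i ≠ 2),
          d (c i) (c (i + 1)) = d (c 3) (c 0))

/-- The set of harmonic 1-forms `H₁(M₂(G))`: antisymmetric functions supported on edges
with vanishing cyclic sum along every cycle of `X₂` and vanishing divergence `δ* α`. -/
def H1set (w : V → V → ℝ) (μ : V → ℝ) (d : V → V → ℝ) : Set (V → V → ℝ) :=
  { α | (∀ x y, α x y = -α y x) ∧ (∀ x y, ¬Adj w x y → α x y = 0) ∧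
      (∀ (n : ℕ) (c : ZMod (n + 3) → V), IsCycle w c → InX2 w d c →
          ∑ i, α (c i) (c (i + 1)) = 0) ∧
      (∀ x, ∑ y, w x y / μ x * α x y = 0) }

/-- The first Betti number `β₁(M₂(G)) = dim H₁(M₂(G))`. -/
noncomputable def betti1 (w : V → V → ℝ) (μ : V → ℝ) (d : V → V → ℝ) : ℕ :=
  Module.finrank ℝ (Submodule.span ℝ (H1set w μ d))

/-- The combinatorial vertex degree. -/
noncomputable def deg (w : V → V → ℝ) (x : V) : ℕ := Nat.card { y : V // Adj w x y }

/-- The minimal combinatorial vertex degree. -/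
noncomputable def degMin (w : V → V → ℝ) : ℕ := ⨅ x : V, deg w x

/-- The maximal combinatorial vertex degree. -/
noncomputable def degMax (w : V → V → ℝ) : ℕ := ⨆ x : V, deg w x

end Finite

end Paper

namespace Paper.Sharp

open SimpleGraph

variable {V : Type*}

/-! ### Walks, their lengths, and geodesics -/

/-- The integral of a two-point function `F` along a walk, i.e. the sum of `F` over the oriented
edges traversed. For `F = d` this is the length of the walk, for a 1-form it is its line
integral. -/
def wsum {G : SimpleGraph V} (F : V → V → ℝ) : {x y : V} → G.Walk x y → ℝ
  | _, _, .nil => 0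
  | x, _, .cons (v := v) _ p => F x v + wsum F p

section walks
variable {G : SimpleGraph V} (F : V → V → ℝ)

@[simp] lemma wsum_nil (x : V) : wsum F (Walk.nil : G.Walk x x) = 0 := rfl

@[simp] lemma wsum_cons {x y z : V} (h : G.Adj x y) (p : G.Walk y z) :
    wsum F (Walk.cons h p) = F x y + wsum F p := rfl

@[simp] lemma wsum_append {x y z : V} (p : G.Walk x y) (q : G.Walk y z) :
    wsum F (p.append q) = wsum F p + wsum F q := by
  induction p with
  | nil => simp
  | cons h p ih => simp [ih, add_assoc]

lemma wsum_reverse {x y : V} (p : G.Walk x y) :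
    wsum F p.reverse = wsum (fun a b => F b a) p := by
  induction p with
  | nil => simp
  | cons h p ih => simp [ih, add_comm]

lemma wsum_neg {x y : V} (p : G.Walk x y) :
    wsum (fun a b => - F a b) p = - wsum F p := by
  induction p with
  | nil => simp
  | cons h p ih => simp [ih, add_comm]

lemma wsum_eq_sum_range {x y : V} (p : G.Walk x y) :
    wsum F p = ∑ i ∈ Finset.range p.length, F (p.getVert i) (p.getVert (i + 1)) := by
  induction p with
  | nil => simp
  | cons h p ih => rw [wsum_cons, Walk.length_cons, Finset.sum_range_succ', ih, add_comm]; simp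

lemma wsum_le {F F' : V → V → ℝ} (h : ∀ x y, G.Adj x y → F x y ≤ F' x y) {x y : V}
    (p : G.Walk x y) : wsum F p ≤ wsum F' p := by
  induction p with
  | nil => simp
  | cons e p ih => simpa using add_le_add (h _ _ e) ih

lemma wsum_mul (c : ℝ) {x y : V} (p : G.Walk x y) :
    wsum (fun a b => c * F a b) p = c * wsum F p := by
  induction p with
  | nil => simp
  | cons h p ih => simp [ih, mul_add]

lemma wsum_nonneg {F : V → V → ℝ} (h : ∀ x y, 0 ≤ F x y) {x y : V}
    (p : G.Walk x y) : 0 ≤ wsum F p := by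
  induction p with
  | nil => simp
  | cons e p ih => simpa using add_nonneg (h _ _) ih

lemma wsum_bypass_le [DecidableEq V] {F : V → V → ℝ} (h : ∀ x y, 0 ≤ F x y) {x y : V}
    (p : G.Walk x y) : wsum F p.bypass ≤ wsum F p := by
  induction p with
  | nil => exact le_of_eq rfl
  | cons e p ih =>
    rw [Walk.bypass]
    split_ifs with hs
    · have := congrArg (wsum F) (p.bypass.take_spec hs)
      rw [wsum_append] at this
      have h1 := wsum_nonneg h (p.bypass.takeUntil _ hs)
      rw [wsum_cons]
      rename_i u v z
      linarith [h u v]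
    · simpa using ih

lemma wsum_reverse_anti {α : V → V → ℝ}
    (hα : ∀ x y, α x y = - α y x) {x y : V}
    (p : G.Walk x y) : wsum α p.reverse = - wsum α p := by
  rw [wsum_reverse, ← wsum_neg]
  congr 1; ext a b; exact hα b a

end walks

variable [Fintype V] {w : V → V → ℝ} {μ : V → ℝ} {d : V → V → ℝ}

/-- The standing hypotheses: a connected weighted graph with a path distance and non-negative
Ollivier curvature. -/
structure Good (w : V → V → ℝ) (μ : V → ℝ) (d : V → V → ℝ) : Prop extends
    IsWeightedGraph w μ where
  conn : GraphConnected w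
  pd : IsPathDistance w d
  curv : NonnegCurv w μ d

/-- The underlying combinatorial graph of a weighted graph. -/
def Good.graph (S : Good w μ d) : SimpleGraph V where
  Adj := Adj w
  symm := ⟨fun x y h => by unfold Adj at *; rwa [S.symm y x]⟩
  loopless := ⟨fun x h => by unfold Adj at h; rw [S.loopless x] at h; exact lt_irrefl _ h⟩

namespace Good
/-- Prepending an edge, given as a `Paper.Adj` fact, to a walk. -/
def consW (S : Good w μ d) {x y z : V} (h : Adj w x y) (p : S.graph.Walk y z) : S.graph.Walk x z :=
  Walk.cons (show S.graph.Adj x y from h) p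

@[simp] lemma wsum_consW (S : Good w μ d) (F : V → V → ℝ) {x y z : V} (h : Adj w x y)
    (p : S.graph.Walk y z) : wsum F (S.consW h p) = F x y + wsum F p := rfl

lemma d_symm (S : Good w μ d) (x y : V) : d x y = d y x := S.pd.1 x y
lemma d_nonneg (S : Good w μ d) (x y : V) : 0 ≤ d x y := S.pd.2.2.1 x y
lemma d_self (S : Good w μ d) (x : V) : d x x = 0 := (S.pd.2.1 x x).2 rfl
lemma d_pos (S : Good w μ d) {x y : V} (h : x ≠ y) : 0 < d x y :=
  lt_of_le_of_ne (S.d_nonneg x y) fun h' => h ((S.pd.2.1 x y).1 h'.symm)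
lemma adj_symm (S : Good w μ d) {x y : V} (h : Adj w x y) : Adj w y x := S.graph.symm.symm _ _ h
lemma adj_ne (S : Good w μ d) {x y : V} (h : Adj w x y) : x ≠ y :=
  SimpleGraph.Adj.ne (G := S.graph) h
lemma d_pos_of_adj (S : Good w μ d) {x y : V} (h : Adj w x y) : 0 < d x y := S.d_pos (S.adj_ne h)

lemma exists_fin_path (S : Good w μ d) {x y : V} (p : S.graph.Walk x y) :
    ∃ (n : ℕ) (c : Fin (n + 1) → V), c 0 = x ∧ c (Fin.last n) = y ∧
        (∀ i : Fin n, Adj w (c i.castSucc) (c i.succ)) ∧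
        wsum d p = ∑ i : Fin n, d (c i.castSucc) (c i.succ) := by
  refine ⟨p.length, fun i => p.getVert i, by simp, by simp, fun i => ?_, ?_⟩
  · exact p.adj_getVert_succ i.2
  · rw [wsum_eq_sum_range, Finset.sum_range]; rfl

lemma exists_walk_of_fin (S : Good w μ d) (n : ℕ) (c : Fin (n + 1) → V)
    (hc : ∀ i : Fin n, Adj w (c i.castSucc) (c i.succ)) :
    ∃ p : S.graph.Walk (c 0) (c (Fin.last n)),
      wsum d p = ∑ i : Fin n, d (c i.castSucc) (c i.succ) := by
  induction n with
  | zero => exact ⟨.nil, by simp⟩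
  | succ n ih =>
    obtain ⟨p, hp⟩ := ih (fun i => c i.succ) (fun i => hc i.succ)
    refine ⟨S.consW (x := c 0) (y := c (Fin.succ 0)) (hc 0) p, ?_⟩
    rw [Fin.sum_univ_succ]
    exact congrArg (_ + ·) hp

lemma d_le_wsum (S : Good w μ d) {x y : V} (p : S.graph.Walk x y) : d x y ≤ wsum d p :=
  (S.pd.2.2.2 x y).1 (S.exists_fin_path p)

lemma exists_walk (S : Good w μ d) (x y : V) : Nonempty (S.graph.Walk x y) := by
  obtain ⟨n, c, rfl, rfl, hc⟩ := S.conn x y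
  exact ⟨(S.exists_walk_of_fin n c hc).choose⟩

/-- A shortest path exists: the infimum over walks may be taken over the finitely many paths. -/
lemma exists_geodesic (S : Good w μ d) (x y : V) :
    ∃ p : S.graph.Walk x y, p.IsPath ∧ wsum d p = d x y := by
  classical
  obtain ⟨p₀⟩ := S.exists_walk x y
  have : Nonempty (S.graph.Path x y) := ⟨p₀.toPath⟩
  have : DecidableRel S.graph.Adj := fun _ _ => Classical.dec _
  obtain ⟨p, hp⟩ := Finite.exists_min fun p : S.graph.Path x y => wsum d p.1
  refine ⟨p.1, p.2, le_antisymm ?_ (S.d_le_wsum _)⟩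
  refine (S.pd.2.2.2 x y).2 ?_
  rintro _ ⟨n, c, rfl, rfl, hc, rfl⟩
  obtain ⟨q, hq⟩ := S.exists_walk_of_fin n c hc
  rw [← hq]
  exact (hp q.toPath).trans (wsum_bypass_le S.d_nonneg q)

lemma d_triangle (S : Good w μ d) (x y z : V) : d x z ≤ d x y + d y z := by
  obtain ⟨p, -, hp⟩ := S.exists_geodesic x y
  obtain ⟨q, -, hq⟩ := S.exists_geodesic y z
  rw [← hp, ← hq, ← wsum_append]
  exact S.d_le_wsum _

lemma d_add_of_mem (S : Good w μ d) {x y z : V} {p : S.graph.Walk x y} (hp : wsum d p = d x y)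
    (hz : z ∈ p.support) : d x z + d z y = d x y := by
  classical
  have := congrArg (wsum d) (p.take_spec hz)
  rw [wsum_append] at this
  linarith [S.d_triangle x z y, S.d_le_wsum (p.takeUntil z hz), S.d_le_wsum (p.dropUntil z hz)]

/-! ### Harmonic forms integrate along walks of at most three edges -/

lemma cycle_sum (S : Good w μ d) {x₀ x₁ x₂ x₃ : V} (h01 : Adj w x₀ x₁) (h12 : Adj w x₁ x₂)
    (h23 : Adj w x₂ x₃) (q : S.graph.Walk x₃ x₀) (hq : q.IsPath)
    (h1 : x₁ ∉ q.support) (h2 : x₂ ∉ q.support) (hd : wsum d q = d x₃ x₀)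
    (hlt : q.length = 0 ∨ d x₀ x₃ < d x₀ x₁ + d x₁ x₂ + d x₂ x₃)
    {α : V → V → ℝ} (hα : α ∈ H1set w μ d) :
    α x₀ x₁ + α x₁ x₂ + α x₂ x₃ + wsum α q = 0 := by
  -- the closed walk `x₀ x₁ x₂ q`, as a sequence
  let C : ℕ → V := fun i => match i with
    | 0 => x₀
    | 1 => x₁
    | 2 => x₂
    | j + 3 => q.getVert j
  have : Fact (1 < q.length + 3) := ⟨by omega⟩
  let c : ZMod (q.length + 3) → V := fun i => C (ZMod.val i)
  have hlast : C (q.length + 3) = C 0 := by simp [C]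
  have hsucc : ∀ i : ZMod (q.length + 3), c (i + 1) = C (ZMod.val i + 1) := by
    intro i
    by_cases h : ZMod.val i + 1 < q.length + 3
    · have : ZMod.val (i + 1) = ZMod.val i + 1 := by
        rw [ZMod.val_add_of_lt, ZMod.val_one]
        rwa [ZMod.val_one]
      simp [c, this]
    · have hv : ZMod.val i + 1 = q.length + 3 := by
        have := ZMod.val_lt i; omega
      have : i + 1 = 0 := by
        have : ((ZMod.val i + 1 : ℕ) : ZMod (q.length + 3)) = 0 := by
          rw [hv]; exact ZMod.natCast_self _
        simpa using this
      rw [this, hv, hlast]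
      simp [c]
  have hsum : ∀ F : V → V → ℝ, ∑ i, F (c i) (c (i + 1)) =
      F x₀ x₁ + F x₁ x₂ + F x₂ x₃ + wsum F q := by
    intro F
    have : ∑ i, F (c i) (c (i + 1)) = ∑ i : Fin (q.length + 3), F (C i) (C (i + 1)) :=
      Finset.sum_congr rfl fun i _ => by rw [hsucc]; rfl
    rw [this, ← Finset.sum_range (fun i => F (C i) (C (i + 1))), Finset.sum_range_succ',
      Finset.sum_range_succ', Finset.sum_range_succ', wsum_eq_sum_range]
    simp [C]
    ring
  have hcyc : IsCycle w c := by
    have hC : ∀ i j, i < q.length + 3 → j < q.length + 3 → i < j → C i ≠ C j := by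
      intro i j hi hj hij
      have hmem : ∀ k, q.getVert k ∈ q.support := fun k => q.getVert_mem_support k
      have h0 : ∀ k, k < q.length → x₀ ≠ q.getVert k := by
        intro k hk h
        have := hq.getVert_injOn (show k ≤ q.length from hk.le) (show q.length ≤ q.length from le_rfl)
          (by rw [← h, q.getVert_length])
        omega
      have h02 : x₀ ≠ x₂ := fun h => h2 (h ▸ q.end_mem_support)
      match i, j with
      | 0, 0 => omega
      | 0, 1 => exact S.adj_ne h01
      | 0, 2 => exact h02
      | 0, j + 3 => exact h0 j (by omega)
      | 1, 1 => omega
      | 1, 2 => exact S.adj_ne h12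
      | 1, j + 3 => exact fun h => h1 (by
          have h : x₁ = q.getVert j := h
          rw [h]; exact hmem j)
      | 2, j + 3 => exact fun h => h2 (by
          have h : x₂ = q.getVert j := h
          rw [h]; exact hmem j)
      | i + 3, j + 3 =>
        intro h
        have := hq.getVert_injOn (show i ≤ q.length by omega) (show j ≤ q.length by omega) h
        omega
    refine ⟨?_, ?_⟩
    · intro i j hij
      apply ZMod.val_injective
      have hi := ZMod.val_lt i
      have hj := ZMod.val_lt j
      rcases lt_trichotomy (ZMod.val i) (ZMod.val j) with h | h | h
      · exact (hC _ _ hi hj h hij).elim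
      · exact h
      · exact (hC _ _ hj hi h hij.symm).elim
    · intro i
      rw [hsucc]
      change Adj w (C (ZMod.val i)) (C (ZMod.val i + 1))
      have hi := ZMod.val_lt i
      generalize ZMod.val i = k at hi
      match k with
      | 0 => exact h01
      | 1 => exact h12
      | 2 => simpa [C] using h23
      | k + 3 => exact q.adj_getVert_succ (by omega)
  rw [← hsum]
  refine hα.2.2.1 q.length c hcyc ?_
  rcases Nat.eq_zero_or_pos q.length with h0 | h0
  · exact Or.inl h0
  right
  have v2 : ZMod.val (2 : ZMod (q.length + 3)) = 2 := by
    have := ZMod.val_cast_of_lt (show 2 < q.length + 3 by omega); simpa using this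
  have v3 : ZMod.val (3 : ZMod (q.length + 3)) = 3 := by
    have := ZMod.val_cast_of_lt (show 3 < q.length + 3 by omega); simpa using this
  have c0 : c 0 = x₀ := by simp [c, C]
  have c1 : c 1 = x₁ := by simp only [c, ZMod.val_one]; rfl
  have c2 : c 2 = x₂ := by simp [c, C, v2]
  have c3 : c 3 = x₃ := by simp [c, C, v3]
  rw [c0, c1, c2, c3]
  refine ⟨hlt.resolve_left h0.ne', ?_⟩
  have hset : Finset.univ.filter (fun i : ZMod (q.length + 3) => i ≠ 0 ∧ i ≠ 1 ∧ i ≠ 2) =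
      Finset.univ \ {0, 1, 2} := by
    ext i; simp
  have h3 : ∑ i ∈ ({0, 1, 2} : Finset (ZMod (q.length + 3))), d (c i) (c (i + 1)) =
      d x₀ x₁ + d x₁ x₂ + d x₂ x₃ := by
    have e01 : (0 : ZMod (q.length + 3)) ≠ 1 := fun h => by
      have := congrArg ZMod.val h; simp [ZMod.val_one] at this
    have e02 : (0 : ZMod (q.length + 3)) ≠ 2 := fun h => by
      have := congrArg ZMod.val h; simp [v2] at this
    have e12 : (1 : ZMod (q.length + 3)) ≠ 2 := fun h => by
      have := congrArg ZMod.val h; simp [v2, ZMod.val_one] at this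
    rw [Finset.sum_insert (by simp [e01, e02]), Finset.sum_insert (by simp [e12]),
      Finset.sum_singleton, zero_add, show (1 : ZMod (q.length + 3)) + 1 = 2 by norm_num,
      show (2 : ZMod (q.length + 3)) + 1 = 3 by norm_num, c0, c1, c2, c3]
    ring
  have h4 := Finset.sum_sdiff (f := fun i => d (c i) (c (i + 1)))
    (Finset.subset_univ ({0, 1, 2} : Finset (ZMod (q.length + 3))))
  rw [hset]
  rw [h3, hsum d] at h4
  linarith

lemma wsum_reverse_d (S : Good w μ d) {x y : V} (p : S.graph.Walk x y) : wsum d p.reverse = wsum d p := by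
  rw [wsum_reverse]
  congr 1; ext a b; exact S.d_symm b a

lemma anti_self {α : V → V → ℝ} (hα : α ∈ H1set w μ d) (x : V) : α x x = 0 := by
  linarith [hα.1 x x]

lemma geod_two (S : Good w μ d) {x₀ x₁ x₂ : V} (h01 : Adj w x₀ x₁) (h12 : Adj w x₁ x₂) :
    ∃ r : S.graph.Walk x₀ x₂, wsum d r = d x₀ x₂ ∧
      ∀ α ∈ H1set w μ d, wsum α r = α x₀ x₁ + α x₁ x₂ := by
  by_cases hs : d x₀ x₂ = d x₀ x₁ + d x₁ x₂
  · exact ⟨S.consW h01 (S.consW h12 .nil), by simp [hs], fun α hα => by simp⟩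
  by_cases h02 : x₀ = x₂
  · subst h02
    exact ⟨.nil, by simp [S.d_self], fun α hα => by simp [hα.1 x₁ x₀]⟩
  obtain ⟨p, hp, hpd⟩ := S.exists_geodesic x₂ x₀
  have h1 : x₁ ∉ p.support := fun h => hs (by
    have := S.d_add_of_mem hpd h
    rw [S.d_symm x₀ x₂, ← this, S.d_symm x₂ x₁, S.d_symm x₁ x₀]; ring)
  refine ⟨p.reverse, by rw [S.wsum_reverse_d, hpd, S.d_symm], fun α hα => ?_⟩
  rw [wsum_reverse_anti hα.1]
  match p with
  | .nil => exact (h02 rfl).elim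
  | .cons (v := x₃) h q =>
    have hd1 : d x₂ x₃ + wsum d q = d x₂ x₀ := hpd
    have hq : wsum d q = d x₃ x₀ := by
      linarith [S.d_le_wsum q, S.d_triangle x₂ x₃ x₀]
    rw [Walk.cons_isPath_iff] at hp
    have := S.cycle_sum h01 h12 h q hp.1 (fun h => h1 (by simp [h])) hp.2 hq
      (Or.inr (by
        linarith [S.d_symm x₂ x₀, S.d_symm x₃ x₀, S.d_triangle x₀ x₁ x₂, S.d_pos_of_adj h,
          lt_of_le_of_ne (S.d_triangle x₀ x₁ x₂) hs])) hα
    rw [wsum_cons]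
    linarith

/-- Along any walk of three edges all harmonic forms have the same integral as along one
common shortest path between its end points: this is what the cycles in `X₂` provide. -/
lemma geod_three (S : Good w μ d) {x₀ x₁ x₂ x₃ : V} (h01 : Adj w x₀ x₁) (h12 : Adj w x₁ x₂)
    (h23 : Adj w x₂ x₃) :
    ∃ r : S.graph.Walk x₀ x₃, wsum d r = d x₀ x₃ ∧
      ∀ α ∈ H1set w μ d, wsum α r = α x₀ x₁ + α x₁ x₂ + α x₂ x₃ := by
  by_cases hs : d x₀ x₃ = d x₀ x₁ + d x₁ x₂ + d x₂ x₃
  · exact ⟨S.consW h01 (S.consW h12 (S.consW h23 .nil)), by simp [hs, add_assoc],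
      fun α hα => by simp [add_assoc]⟩
  have hlt : d x₀ x₃ < d x₀ x₁ + d x₁ x₂ + d x₂ x₃ :=
    lt_of_le_of_ne (by linarith [S.d_triangle x₀ x₁ x₃, S.d_triangle x₁ x₂ x₃]) hs
  obtain ⟨q, hq, hqd⟩ := S.exists_geodesic x₃ x₀
  by_cases h1 : x₁ ∈ q.support
  · obtain ⟨r, hr, hrα⟩ := S.geod_two h12 h23
    refine ⟨S.consW h01 r, ?_, fun α hα => by rw [wsum_consW, hrα α hα]; ring⟩
    have := S.d_add_of_mem hqd h1
    rw [wsum_consW, hr, S.d_symm x₀ x₃, ← this, S.d_symm x₀ x₁, S.d_symm x₁ x₃, add_comm]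
  by_cases h2 : x₂ ∈ q.support
  · obtain ⟨r, hr, hrα⟩ := S.geod_two h01 h12
    refine ⟨r.append (S.consW h23 .nil), ?_, fun α hα => by simp [hrα α hα]⟩
    have := S.d_add_of_mem hqd h2
    rw [wsum_append, hr, S.d_symm x₀ x₃, ← this, S.d_symm x₀ x₂]
    simp [S.d_symm x₂ x₃, add_comm]
  refine ⟨q.reverse, by rw [S.wsum_reverse_d, hqd, S.d_symm], fun α hα => ?_⟩
  rw [wsum_reverse_anti hα.1]
  linarith [S.cycle_sum h01 h12 h23 q hq h1 h2 hqd (Or.inr hlt) hα]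

/-- The ball-to-ball form of `geod_three`: the outer edges may be degenerate. -/
lemma geod_ball (S : Good w μ d) {x y z z' : V} (hxy : Adj w x y) (hz : z = x ∨ Adj w z x)
    (hz' : z' = y ∨ Adj w y z') :
    ∃ r : S.graph.Walk z z', wsum d r = d z z' ∧
      ∀ α ∈ H1set w μ d, wsum α r = α z x + α x y + α y z' := by
  rcases hz with rfl | hz <;> rcases hz' with rfl | hz'
  · refine ⟨S.consW hxy .nil, by simp, fun α hα => ?_⟩
    simp [anti_self hα]
  · obtain ⟨r, h1, h2⟩ := S.geod_two hxy hz'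
    exact ⟨r, h1, fun α hα => by simp [anti_self hα, h2 α hα]⟩
  · obtain ⟨r, h1, h2⟩ := S.geod_two hz hxy
    exact ⟨r, h1, fun α hα => by simp [anti_self hα, h2 α hα]⟩
  · exact S.geod_three hz hxy hz'

end Good

end Paper.Sharp

namespace Paper.Sharp

open SimpleGraph

variable {V : Type*} [Fintype V] {w : V → V → ℝ} {μ : V → ℝ} {d : V → V → ℝ}

namespace Good

/-! ### Curvature as a comparison of Laplacians -/

lemma weight_nonneg (S : Good w μ d) (x y : V) : 0 ≤ w x y / μ x :=
  div_nonneg (S.nonneg x y) (S.mu_pos x).le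

lemma weight_eq_zero (S : Good w μ d) {x y : V} (h : ¬ Adj w x y) : w x y / μ x = 0 := by
  have : w x y = 0 := le_antisymm (not_lt.1 h) (S.nonneg x y)
  simp [this]

lemma weight_pos (S : Good w μ d) {x y : V} (h : Adj w x y) : 0 < w x y / μ x :=
  div_pos h (S.mu_pos x)

lemma abs_lap_le (S : Good w μ d) {f : V → ℝ} (hf : gradNorm w d f = 1) (x : V) :
    |lap w μ f x| ≤ ∑ y, w x y / μ x * d x y := by
  refine (Finset.abs_sum_le_sum_abs _ _).trans (Finset.sum_le_sum fun y _ => ?_)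
  by_cases h : Adj w x y
  · rw [abs_mul, abs_of_nonneg (S.weight_nonneg x y)]
    refine mul_le_mul_of_nonneg_left ?_ (S.weight_nonneg x y)
    have hbdd : BddAbove { r : ℝ | ∃ x y, Adj w x y ∧ r = |grad d f x y| } := by
      refine ((Set.finite_range fun p : V × V => |grad d f p.1 p.2|).subset ?_).bddAbove
      rintro _ ⟨x, y, -, rfl⟩
      exact ⟨(x, y), rfl⟩
    have := le_csSup hbdd ⟨x, y, h, rfl⟩
    rw [gradNorm] at hf
    rw [hf, grad, abs_div, abs_of_pos (S.d_pos_of_adj h),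
      div_le_one (S.d_pos_of_adj h), abs_sub_comm] at this
    exact this
  · simp [S.weight_eq_zero h]

/-- Non-negative curvature in the form used below: if `f` is `M`-Lipschitz and its gradient is
extremal on the edge from `x` to `y`, then the Laplacian of `f` does not increase along it. -/
lemma lap_le (S : Good w μ d) {x y : V} (h : Adj w x y) {M : ℝ} (hM : 0 < M) (f : V → ℝ)
    (hf : ∀ u v, Adj w u v → f u - f v ≤ M * d u v) (hxy : f y - f x = M * d x y) :
    lap w μ f y ≤ lap w μ f x := by
  have hdxy := S.d_pos_of_adj h
  set g : V → ℝ := fun v => f v / M with hg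
  have hgrad : grad d g y x = 1 := by
    rw [grad, S.d_symm y x, div_eq_one_iff_eq hdxy.ne', hg]
    field_simp
    linarith
  have hnorm : gradNorm w d g = 1 := by
    refine IsGreatest.csSup_eq ⟨⟨y, x, S.adj_symm h, by rw [hgrad, abs_one]⟩, ?_⟩
    rintro _ ⟨u, v, huv, rfl⟩
    have hduv := S.d_pos_of_adj huv
    have h1 := hf u v huv
    have h2 := hf v u (S.adj_symm huv)
    rw [S.d_symm v u] at h2
    rw [grad, abs_div, abs_of_pos hduv, div_le_one hduv, hg]
    simp only
    rw [← sub_div, abs_div, abs_of_pos hM, div_le_iff₀ hM, abs_le]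
    constructor <;> nlinarith
  have hbdd : BddBelow { r : ℝ | ∃ f : V → ℝ, grad d f y x = 1 ∧ gradNorm w d f = 1 ∧
      r = grad d (lap w μ f) x y } := by
    refine ⟨-((∑ v, w x v / μ x * d x v) + ∑ v, w y v / μ y * d y v) / d x y, ?_⟩
    rintro _ ⟨f, -, hf, rfl⟩
    rw [grad]
    refine div_le_div_of_nonneg_right ?_ hdxy.le
    have h1 := abs_le.1 (S.abs_lap_le hf x)
    have h2 := abs_le.1 (S.abs_lap_le hf y)
    linarith [h1.1, h2.2]
  have hk : 0 ≤ grad d (lap w μ g) x y :=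
    (S.curv x y h).trans (csInf_le hbdd ⟨g, hgrad, hnorm, rfl⟩)
  have hlap : ∀ v, lap w μ g v = lap w μ f v / M := by
    intro v
    rw [lap, lap, Finset.sum_div]
    refine Finset.sum_congr rfl fun u _ => ?_
    rw [hg]; ring
  rw [grad, hlap, hlap, ← sub_div, le_div_iff₀ hdxy, zero_mul, le_div_iff₀ hM, zero_mul] at hk
  linarith

/-- A version of `lap_le` for a function given by `a` on the ball about `x` and by `b` on the
ball about `y`, with no consistency required beyond the Lipschitz bound from one ball to the
other; the comparison function is the McShane extension of `b`. -/
lemma lap_le_local (S : Good w μ d) {x y : V} (h : Adj w x y) {L : ℝ} (hL : 0 < L) (a b : V → ℝ)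
    (hay : a y = b y) (hxy : b y - a x = L * d x y)
    (hab : ∀ z z', (z = x ∨ Adj w z x) → (z' = y ∨ Adj w y z') → b z' - a z ≤ L * d z z') :
    ∑ v, w y v / μ y * (b v - b y) ≤ ∑ v, w x v / μ x * (a v - a x) := by
  classical
  let B : Finset V := Finset.univ.filter fun z' => z' = y ∨ Adj w y z'
  have hyB : y ∈ B := by simp [B]
  let g : V → ℝ := fun v => B.sup' ⟨y, hyB⟩ fun z' => b z' - L * d z' v
  have hge : ∀ z' v, (z' = y ∨ Adj w y z') → b z' - L * d z' v ≤ g v := fun z' v hz' =>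
    Finset.le_sup' (fun z' => b z' - L * d z' v) (by simpa [B] using hz')
  have hle : ∀ v c, (∀ z', (z' = y ∨ Adj w y z') → b z' - L * d z' v ≤ c) → g v ≤ c := by
    intro v c hc
    exact Finset.sup'_le _ _ fun z' hz' => hc z' (by simpa [B] using hz')
  have hgle : ∀ z, (z = x ∨ Adj w z x) → g z ≤ a z := fun z hz => hle _ _ fun z' hz' => by
    linarith [hab z z' hz hz', S.d_symm z z', congrArg (L * ·) (S.d_symm z z')]
  have hgge : ∀ z', (z' = y ∨ Adj w y z') → b z' ≤ g z' := fun z' hz' => by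
    simpa [S.d_self] using hge z' z' hz'
  have hgy : g y = b y :=
    le_antisymm (hay ▸ hgle y (Or.inr (S.adj_symm h))) (hgge y (Or.inl rfl))
  have hgx : g x = a x := by
    refine le_antisymm (hgle x (Or.inl rfl)) ?_
    have := hge y x (Or.inl rfl)
    rw [S.d_symm y x] at this
    linarith
  have hlip : ∀ u v, Adj w u v → g u - g v ≤ L * d u v := by
    intro u v _
    have : g u ≤ g v + L * d u v := hle _ _ fun z' hz' => by
      have h1 := hge z' v hz'
      have h2 := mul_le_mul_of_nonneg_left (S.d_triangle z' u v) hL.le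
      linarith
    linarith
  have key := S.lap_le h hL g hlip (by rw [hgy, hgx, hxy])
  refine le_trans (Finset.sum_le_sum fun v _ => ?_) (key.trans (Finset.sum_le_sum fun v _ => ?_))
  · by_cases hv : Adj w y v
    · exact mul_le_mul_of_nonneg_left (by linarith [hgge v (Or.inr hv)]) (S.weight_nonneg _ _)
    · simp [S.weight_eq_zero hv]
  · by_cases hv : Adj w x v
    · exact mul_le_mul_of_nonneg_left (by linarith [hgle v (Or.inr (S.adj_symm hv))])
        (S.weight_nonneg _ _)
    · simp [S.weight_eq_zero hv]

/-! ### Propagation of extremal edges -/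

/-- The oriented edge from `x` to `y` is tight if `α` attains there the Lipschitz bound `M`. -/
def Tight (w d : V → V → ℝ) (α : V → V → ℝ) (M : ℝ) (x y : V) : Prop :=
  Adj w x y ∧ α x y = M * d x y

variable {α : V → V → ℝ} {M : ℝ}

lemma wsum_le_mul (S : Good w μ d) (hM : ∀ x y, Adj w x y → α x y ≤ M * d x y) {x y : V}
    (p : S.graph.Walk x y) : wsum α p ≤ M * wsum d p := by
  rw [← wsum_mul]
  exact wsum_le (fun x y h => hM x y h) p

lemma tight_of_cons (S : Good w μ d) (hM : ∀ x y, Adj w x y → α x y ≤ M * d x y) {x y z : V}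
    (h : S.graph.Adj x y) (p : S.graph.Walk y z)
    (hp : wsum α (Walk.cons h p) = M * wsum d (Walk.cons h p)) :
    Tight w d α M x y ∧ wsum α p = M * wsum d p := by
  have h1 := S.wsum_le_mul hM p
  have h2 := hM x y h
  rw [wsum_cons, wsum_cons] at hp
  exact ⟨⟨h, by linarith⟩, by linarith⟩

lemma ball_le (S : Good w μ d) (hα : α ∈ H1set w μ d)
    (hM : ∀ x y, Adj w x y → α x y ≤ M * d x y) {x y z z' : V} (hxy : Adj w x y)
    (hz : z = x ∨ Adj w z x) (hz' : z' = y ∨ Adj w y z') :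
    α z x + α x y + α y z' ≤ M * d z z' := by
  obtain ⟨r, hr, hr'⟩ := S.geod_ball hxy hz hz'
  rw [← hr' α hα, ← hr]
  exact S.wsum_le_mul hM r

/-- If the edge from `x` to `y` is tight, every neighbour of `y` is reached extremally from the
ball about `x`: otherwise the form could be raised there, contradicting `lap_le_local`. -/
lemma exists_pred (S : Good w μ d) (hα : α ∈ H1set w μ d) (hM0 : 0 < M)
    (hM : ∀ x y, Adj w x y → α x y ≤ M * d x y) {x y z' : V} (hxy : Tight w d α M x y)
    (hz' : z' = y ∨ Adj w y z') :
    ∃ z, (z = x ∨ Adj w z x) ∧ α z x + α x y + α y z' = M * d z z' := by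
  classical
  have h0 := anti_self hα
  rcases hz' with rfl | hz'
  · exact ⟨x, Or.inl rfl, by rw [h0, h0, hxy.2]; ring⟩
  by_cases hzx : z' = x
  · subst hzx
    exact ⟨z', Or.inl rfl, by rw [h0, S.d_self, hα.1 y z']; ring⟩
  by_contra! hcon
  have hlt : ∀ z, (z = x ∨ Adj w z x) → α z x + α x y + α y z' < M * d z z' := fun z hz =>
    lt_of_le_of_ne (S.ball_le hα hM hxy.1 hz (Or.inr hz')) (hcon z hz)
  have : Nonempty {z // z = x ∨ Adj w z x} := ⟨⟨x, Or.inl rfl⟩⟩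
  obtain ⟨⟨z₀, hz₀⟩, hmin⟩ := Finite.exists_min fun z : {z // z = x ∨ Adj w z x} =>
    M * d z z' - (α z x + α x y + α y z')
  set η := M * d z₀ z' - (α z₀ x + α x y + α y z') with hη
  have hηpos : 0 < η := by linarith [hlt z₀ hz₀]
  have hyz : y ≠ z' := S.adj_ne hz'
  have key := S.lap_le_local hxy.1 hM0 (fun v => α x v)
    (fun v => α x y + α y v + if v = z' then η else 0) (by simp [h0, hyz])
    (by simp [h0, hyz, hxy.2]) (by
      intro z v hz hv
      have h1 := hα.1 x z
      by_cases hvz : v = z'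
      · subst hvz
        have := hmin ⟨z, hz⟩
        simp only at this
        simp only [if_true]
        linarith
      · simp only [hvz, if_false]
        linarith [S.ball_le hα hM hxy.1 hz hv])
  have e1 : ∑ v, w x v / μ x * (α x v - α x x) = 0 := by
    simpa [h0] using hα.2.2.2 x
  have e2 : ∑ v, w y v / μ y * ((α x y + α y v + if v = z' then η else 0) -
      (α x y + α y y + if y = z' then η else 0)) = w y z' / μ y * η := by
    have : ∀ v, w y v / μ y * ((α x y + α y v + if v = z' then η else 0) -
      (α x y + α y y + if y = z' then η else 0)) = w y v / μ y * α y v +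
        if v = z' then w y z' / μ y * η else 0 := by
      intro v
      by_cases hv : v = z'
      · subst hv; simp [hyz, h0]; ring
      · simp [hyz, h0, hv]
    simp_rw [this]
    rw [Finset.sum_add_distrib, hα.2.2.2 y]
    simp
  rw [e1, e2] at key
  exact absurd key (not_le.2 (mul_pos (S.weight_pos hz') hηpos))

lemma tight_le_diff (S : Good w μ d) (hM : ∀ x y, Adj w x y → α x y ≤ M * d x y) {h : V → ℝ}
    (hh : ∀ u v, Tight w d α M u v → d u v ≤ h v - h u) {x y : V} (p : S.graph.Walk x y)
    (hp : wsum α p = M * wsum d p) : wsum d p ≤ h y - h x := by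
  induction p with
  | nil => simp
  | cons e p ih =>
    obtain ⟨h1, h2⟩ := S.tight_of_cons hM e p hp
    rw [wsum_cons]
    linarith [ih h2, hh _ _ h1]

/-- If `h` grows at least at unit speed along all tight edges, and exactly at unit speed along
the tight edge from `x` to `y`, then perturbing the local primitive of `α` to `α - εh` keeps it
extremal, so that the Laplacian of `h` does not decrease along this edge. -/
lemma lap_mono_of_tight (S : Good w μ d) (hα : α ∈ H1set w μ d) (hM0 : 0 < M)
    (hM : ∀ x y, Adj w x y → α x y ≤ M * d x y) {h : V → ℝ}
    (hh : ∀ u v, Tight w d α M u v → d u v ≤ h v - h u) {x y : V} (hxy : Tight w d α M x y)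
    (hhxy : h y - h x = d x y) : lap w μ h x ≤ lap w μ h y := by
  have h0 := anti_self hα
  have hev : ∀ᶠ ε in nhdsWithin (0 : ℝ) (Set.Ioi 0), 0 < ε ∧ ε < M ∧
      ∀ z z', (z = x ∨ Adj w z x) → (z' = y ∨ Adj w y z') →
        α z x + α x y + α y z' ≤ M * d z z' + ε * (h z' - h z - d z z') := by
    refine (eventually_mem_nhdsWithin).and (Filter.Eventually.and ?_ ?_)
    · exact Filter.Eventually.filter_mono nhdsWithin_le_nhds (eventually_lt_nhds hM0)
    · rw [Filter.eventually_all]; intro z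
      rw [Filter.eventually_all]; intro z'
      rw [Filter.eventually_imp_distrib_left]; intro hz
      rw [Filter.eventually_imp_distrib_left]; intro hz'
      obtain ⟨r, hr, hr'⟩ := S.geod_ball hxy.1 hz hz'
      rcases (S.ball_le hα hM hxy.1 hz hz').lt_or_eq with hlt | heq
      · have ht : Filter.Tendsto (fun ε : ℝ => M * d z z' + ε * (h z' - h z - d z z'))
            (nhds 0) (nhds (M * d z z' + 0 * (h z' - h z - d z z'))) :=
          (by fun_prop : Continuous fun ε : ℝ =>
            M * d z z' + ε * (h z' - h z - d z z')).tendsto 0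
        rw [zero_mul, add_zero] at ht
        exact (ht.eventually (lt_mem_nhds hlt)).filter_mono nhdsWithin_le_nhds |>.mono
          fun _ => le_of_lt
      · filter_upwards [eventually_mem_nhdsWithin] with ε hε
        have := S.tight_le_diff hM hh r (by rw [hr' α hα, heq, hr])
        rw [hr] at this
        rw [heq]
        have : 0 ≤ ε * (h z' - h z - d z z') :=
          mul_nonneg (le_of_lt hε) (by linarith)
        linarith
  obtain ⟨ε, hε, hεM, hbd⟩ := hev.exists
  have key := S.lap_le_local hxy.1 (sub_pos.2 hεM) (fun v => α x v - ε * h v)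
    (fun v => α x y + α y v - ε * h v) (by simp [h0])
    (by simp only [h0, hxy.2]; rw [← hhxy]; ring) (by
      intro z z' hz hz'
      have := hbd z z' hz hz'
      have h1 := hα.1 x z
      linarith)
  have e1 : ∀ v, ∀ c : ℝ, ∑ u, w v u / μ v * ((c + α v u - ε * h u) - (c + α v v - ε * h v)) =
      - ε * lap w μ h v := by
    intro v c
    have e : ∀ u, w v u / μ v * ((c + α v u - ε * h u) - (c + α v v - ε * h v)) =
        w v u / μ v * α v u + - ε * (w v u / μ v * (h u - h v)) := by
      intro u; rw [h0]; ring
    simp_rw [e]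
    rw [Finset.sum_add_distrib, hα.2.2.2 v, ← Finset.mul_sum, zero_add, lap]
  have e2 := e1 x 0
  simp only [zero_add] at e2
  rw [e1, e2] at key
  nlinarith

lemma subharmonic_const (S : Good w μ d) {h : V → ℝ} (hh : ∀ v, 0 ≤ lap w μ h v) (x y : V) :
    h x = h y := by
  have : Nonempty V := ⟨x⟩
  obtain ⟨b, hb⟩ := Finite.exists_max h
  have step : ∀ u v, Adj w u v → h u = h b → h v = h b := by
    intro u v huv hu
    have h1 : ∀ v ∈ Finset.univ, w u v / μ u * (h v - h u) ≤ 0 := fun v _ =>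
      mul_nonpos_of_nonneg_of_nonpos (S.weight_nonneg u v) (by rw [hu]; linarith [hb v])
    have h2 : ∑ v, w u v / μ u * (h v - h u) = 0 :=
      le_antisymm (Finset.sum_nonpos h1) (hh u)
    have h3 := (Finset.sum_eq_zero_iff_of_nonpos h1).1 h2 v (Finset.mem_univ v)
    have := (mul_eq_zero.1 h3).resolve_left (S.weight_pos huv).ne'
    linarith
  have all : ∀ v, h v = h b := by
    intro v
    obtain ⟨p⟩ := S.exists_walk b v
    have : ∀ {a c : V} (p : S.graph.Walk a c), h a = h b → h c = h b := by
      intro a c p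
      induction p with
      | nil => exact id
      | cons e p ih => exact fun ha => ih (step _ _ e ha)
    exact this p rfl
  rw [all x, all y]

/-- The tight edges contain an infinite backward path. Otherwise `h v`, the length of the longest
tight walk ending at `v`, would be subharmonic, hence constant. -/
lemma not_wellFounded_tight (S : Good w μ d) (hα : α ∈ H1set w μ d) (hM0 : 0 < M)
    (hM : ∀ x y, Adj w x y → α x y ≤ M * d x y) {x y : V} (hxy : Tight w d α M x y) :
    ¬ WellFounded (Tight w d α M) := by
  classical
  intro hwf
  have hne : (Finset.univ : Finset V).Nonempty := ⟨x, Finset.mem_univ x⟩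
  let h : V → ℝ := hwf.fix fun v rec =>
    Finset.univ.sup' hne fun u => if hu : Tight w d α M u v then rec u hu + d u v else 0
  have heq : ∀ v, h v = Finset.univ.sup' hne fun u =>
      if Tight w d α M u v then h u + d u v else 0 := by
    intro v
    have := hwf.fix_eq (fun v (rec : ∀ u, Tight w d α M u v → ℝ) =>
      Finset.univ.sup' hne fun u => if hu : Tight w d α M u v then rec u hu + d u v else 0) v
    simpa only [dite_eq_ite] using this
  have hnn : ∀ v, 0 ≤ h v := by
    intro v
    rw [heq]
    refine le_trans ?_ (Finset.le_sup' _ (Finset.mem_univ v))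
    rw [if_neg fun hv => S.adj_ne hv.1 rfl]
  have hh : ∀ u v, Tight w d α M u v → d u v ≤ h v - h u := by
    intro u v huv
    have : h u + d u v ≤ h v := by
      conv_rhs => rw [heq v]
      refine le_trans (le_of_eq ?_) (Finset.le_sup' _ (Finset.mem_univ u))
      rw [if_pos huv]
    linarith
  have hlap : ∀ v, 0 ≤ lap w μ h v := by
    intro v
    induction v using hwf.induction with
    | _ v ih =>
    obtain ⟨u, -, hu⟩ := Finset.exists_mem_eq_sup' hne fun u =>
      if Tight w d α M u v then h u + d u v else 0
    rw [← heq] at hu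
    split_ifs at hu with huv
    · exact (ih u huv).trans (S.lap_mono_of_tight hα hM0 hM hh huv (by linarith))
    · refine Finset.sum_nonneg fun z _ => mul_nonneg (S.weight_nonneg v z) ?_
      rw [hu, sub_zero]; exact hnn z
  have := S.subharmonic_const hlap x y
  linarith [hh x y hxy, S.d_pos_of_adj hxy.1]

/-- A tight walk can be transported to any neighbour of its end point. -/
lemma shift_walk (S : Good w μ d) (hα : α ∈ H1set w μ d) (hM0 : 0 < M)
    (hM : ∀ x y, Adj w x y → α x y ≤ M * d x y) {u y z' : V} (p : S.graph.Walk u y)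
    (hp : wsum α p = M * wsum d p) (hz' : z' = y ∨ Adj w z' y) :
    ∃ z, (z = u ∨ Adj w z u) ∧ ∃ q : S.graph.Walk z z', wsum α q = M * wsum d q ∧
      wsum α q = α z u + wsum α p + α y z' := by
  induction p with
  | @nil y =>
    refine ⟨z', hz', .nil, by simp, ?_⟩
    rw [hα.1 z' y]; simp
  | cons e p ih =>
    obtain ⟨h1, h2⟩ := S.tight_of_cons hM e p hp
    obtain ⟨z₁, hz₁, q, hq, hq'⟩ := ih h2 hz'
    have hz₁' := hz₁.imp_right S.adj_symm
    obtain ⟨z, hz, hzz⟩ := S.exists_pred hα hM0 hM h1 hz₁'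
    obtain ⟨r, hr, hr'⟩ := S.geod_ball h1.1 hz hz₁'
    refine ⟨z, hz, r.append q, ?_, ?_⟩
    · rw [wsum_append, wsum_append, hr' α hα, hzz, hq, hr]; ring
    · rw [wsum_append, hr' α hα, hq', wsum_cons]
      rename_i a b c
      linarith [hα.1 z₁ b]

/-- As soon as one edge is tight, every vertex is the end point of a tight edge. -/
lemma exists_tight (S : Good w μ d) (hα : α ∈ H1set w μ d) (hM0 : 0 < M)
    (hM : ∀ x y, Adj w x y → α x y ≤ M * d x y) {x y : V} (hxy : Tight w d α M x y) (v : V) :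
    ∃ u, Tight w d α M u v := by
  have hne : Nonempty V := ⟨x⟩
  obtain ⟨⟨a, b⟩, hab⟩ := Finite.exists_max fun p : V × V => d p.1 p.2
  have : Nonempty {p : V × V // Adj w p.1 p.2} := ⟨⟨(x, y), hxy.1⟩⟩
  obtain ⟨⟨⟨a', b'⟩, hab'⟩, hmin⟩ :=
    Finite.exists_min fun p : {p : V × V // Adj w p.1 p.2} => d p.1.1 p.1.2
  have hδ := S.d_pos_of_adj hab'
  -- vertices reached by arbitrarily long tight walks
  let A : V → Prop := fun v => ∀ K : ℝ, ∃ u, ∃ q : S.graph.Walk u v,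
    wsum α q = M * wsum d q ∧ K ≤ wsum d q
  have hA0 : ∃ v, A v := by
    have := S.not_wellFounded_tight hα hM0 hM hxy
    rw [wellFounded_iff_isEmpty_descending_chain, not_isEmpty_iff] at this
    obtain ⟨f, hf⟩ := this
    have hn : ∀ n : ℕ, ∃ q : S.graph.Walk (f n) (f 0),
        wsum α q = M * wsum d q ∧ n * d a' b' ≤ wsum d q := by
      intro n
      induction n with
      | zero => exact ⟨.nil, by simp⟩
      | succ n ih =>
        obtain ⟨q, hq, hq'⟩ := ih
        refine ⟨S.consW (hf n).1 q, ?_, ?_⟩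
        · rw [wsum_consW, wsum_consW, hq, (hf n).2]; ring
        · rw [wsum_consW]
          have := hmin ⟨(f (n + 1), f n), (hf n).1⟩
          simp only at this
          push_cast
          linarith
    refine ⟨f 0, fun K => ?_⟩
    obtain ⟨n, hn'⟩ := exists_nat_ge (K / d a' b')
    obtain ⟨q, hq, hq'⟩ := hn n
    exact ⟨f n, q, hq, ((div_le_iff₀ hδ).1 hn').trans hq'⟩
  have hstep : ∀ y z, Adj w y z → A y → A z := by
    intro y z hyz hy K
    obtain ⟨u, p, hp, hp'⟩ := hy (K + 2 * d a b)
    obtain ⟨z₁, hz₁, q, hq, hq'⟩ := S.shift_walk hα hM0 hM p hp (Or.inr (S.adj_symm hyz))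
    refine ⟨z₁, q, hq, ?_⟩
    have h1 : - (M * d a b) ≤ α y z := by
      have h2 := hM z y (S.adj_symm hyz)
      have h3 := mul_le_mul_of_nonneg_left (hab (z, y)) hM0.le
      simp only at h3
      linarith [hα.1 y z]
    have h4 : - (M * d a b) ≤ α z₁ u := by
      rcases hz₁ with rfl | hz₁
      · rw [anti_self hα]
        have := mul_nonneg hM0.le (S.d_nonneg a b)
        linarith
      · have h2 := hM u z₁ (S.adj_symm hz₁)
        have h3 := mul_le_mul_of_nonneg_left (hab (u, z₁)) hM0.le
        simp only at h3
        linarith [hα.1 z₁ u]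
    have h5 := mul_le_mul_of_nonneg_left hp' hM0.le
    rw [hq, hp] at hq'
    have : M * K ≤ M * wsum d q := by linarith
    exact le_of_mul_le_mul_left this hM0
  have hAv : A v := by
    obtain ⟨v₀, hv₀⟩ := hA0
    obtain ⟨p⟩ := S.exists_walk v₀ v
    have : ∀ {a c : V} (p : S.graph.Walk a c), A a → A c := by
      intro a c p
      induction p with
      | nil => exact id
      | cons e p ih => exact fun ha => ih (hstep _ _ e ha)
    exact this p hv₀
  obtain ⟨u, q, hq, hq'⟩ := hAv 1
  have hlast : ∀ {a c : V} (p : S.graph.Walk a c), wsum α p = M * wsum d p → 0 < wsum d p →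
      ∃ u, Tight w d α M u c := by
    intro a c p
    induction p with
    | nil => exact fun _ h => absurd h (by simp)
    | cons e p ih =>
      intro hp _
      obtain ⟨h1, h2⟩ := S.tight_of_cons hM e p hp
      cases p with
      | nil => exact ⟨_, h1⟩
      | cons e' p' =>
        refine ih h2 ?_
        rw [wsum_cons]
        exact add_pos_of_pos_of_nonneg (S.d_pos_of_adj e') (wsum_nonneg S.d_nonneg _)
  exact hlast q hq (by linarith)

end Good

end Paper.Sharp

namespace Paper.Sharp

open SimpleGraph

/-! ### Exposed functionals of a polyhedral norm -/

section LinearAlgebra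

variable {W : Type*} [AddCommGroup W] [Module ℝ W] {ι : Type*}

/-- A functional `u` is exposed for the gauge `M` when it agrees with `M` near some point `α`, in
the radial sense that every segment issuing from `α` contains a further point at which `M` and
`u` agree. -/
def Exposed (M : W → ℝ) (u : W →ₗ[ℝ] ℝ) : Prop :=
  ∃ α, ∀ β, ∃ t : ℝ, 0 < t ∧ M (α + t • β) = u (α + t • β)

/-- If `M` is a maximum of finitely many functionals without common kernel, then the coordinate
functionals of a suitable basis are exposed. An inclusion-minimal family with maximum `M` consists
of exposed functionals and still has no common kernel, so it contains a basis of the dual. -/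
lemma exists_exposed_basis [FiniteDimensional ℝ W] [Finite ι] (e : ι → W →ₗ[ℝ] ℝ) (M : W → ℝ)
    (hle : ∀ i α, e i α ≤ M α) (hatt : ∀ α, ∃ i, e i α = M α)
    (h0 : ∀ α, (∀ i, e i α = 0) → α = 0) :
    ∃ b : Module.Basis (Fin (Module.finrank ℝ W)) ℝ W, ∀ i, Exposed M (b.coord i) := by
  classical
  cases nonempty_fintype ι
  obtain ⟨J, hJ⟩ := exists_minimal_of_wellFoundedLT (fun J : Finset ι => ∀ α, ∃ i ∈ J, e i α = M α)
    ⟨Finset.univ, fun α => by simpa using hatt α⟩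
  have hexp : ∀ j ∈ J, Exposed M (e j) := by
    intro j hj
    have hn : ¬ ∀ α, ∃ i ∈ J.erase j, e i α = M α := fun h =>
      Finset.notMem_erase j J (hJ.2 h (Finset.erase_subset j J) hj)
    push Not at hn
    obtain ⟨α, hα⟩ := hn
    obtain ⟨j', hj', hj'α⟩ := hJ.1 α
    have hjj : j' = j := by
      by_contra h
      exact hα j' (Finset.mem_erase.2 ⟨h, hj'⟩) hj'α
    subst hjj
    refine ⟨α, fun β => ?_⟩
    have hev : ∀ i ∈ J.erase j', ∀ᶠ t : ℝ in nhdsWithin 0 (Set.Ioi 0),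
        e i (α + t • β) < e j' (α + t • β) := by
      intro i hi
      have hlt : e i α < e j' α := by
        rw [hj'α]; exact lt_of_le_of_ne (hle i α) (hα i hi)
      have hc : ∀ k, Continuous fun t : ℝ => e k (α + t • β) := by
        intro k
        simp only [map_add, map_smul, smul_eq_mul]
        fun_prop
      refine Filter.Eventually.filter_mono nhdsWithin_le_nhds ?_
      refine (hc i).continuousAt.eventually_lt (hc j').continuousAt ?_
      simpa using hlt
    have hev' := (Finset.eventually_all (J.erase j')).2 hev
    obtain ⟨t, ht, ht0⟩ := (hev'.and eventually_mem_nhdsWithin).exists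
    refine ⟨t, ht0, ?_⟩
    obtain ⟨i, hi, hiM⟩ := hJ.1 (α + t • β)
    by_cases hij : i = j'
    · rw [← hiM, hij]
    · have h1 := ht i (Finset.mem_erase.2 ⟨hij, hi⟩)
      have h2 := hle j' (α + t • β)
      linarith
  have hker : ∀ α, (∀ j ∈ J, e j α = 0) → α = 0 := by
    intro α hα
    refine h0 α fun i => ?_
    obtain ⟨j, hj, hjM⟩ := hJ.1 α
    obtain ⟨j', hj', hj'M⟩ := hJ.1 (-α)
    have h1 := hle i α
    have h2 := hle i (-α)
    rw [← hjM, hα j hj] at h1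
    rw [← hj'M, map_neg, map_neg, hα j' hj'] at h2
    linarith
  obtain ⟨B, hBJ, hspan, hli⟩ := exists_linearIndependent ℝ (e '' (J : Set ι))
  have hBfin : B.Finite := (J.finite_toSet.image e).subset hBJ
  have := hBfin.fintype
  let T : W →ₗ[ℝ] (B → ℝ) := LinearMap.pi fun u => u.1
  have hT : Function.Injective T := by
    rw [← LinearMap.ker_eq_bot, LinearMap.ker_eq_bot']
    intro α hα
    have hB : ∀ u ∈ Submodule.span ℝ B, u α = 0 := by
      intro u hu
      induction hu using Submodule.span_induction with
      | mem u hu => exact congrFun hα ⟨u, hu⟩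
      | zero => rfl
      | add u v _ _ hu hv => simp [hu, hv]
      | smul c u _ hu => simp [hu]
    refine hker α fun j hj => hB _ ?_
    rw [hspan]
    exact Submodule.subset_span ⟨j, hj, rfl⟩
  have hcard : Module.finrank ℝ W = Fintype.card B := by
    apply le_antisymm
    · simpa using LinearMap.finrank_le_finrank_of_injective hT
    · have := hli.fintype_card_le_finrank
      have h2 : Module.finrank ℝ (W →ₗ[ℝ] ℝ) = Module.finrank ℝ W := Subspace.dual_finrank_eq
      rwa [h2] at this
  let E := LinearMap.linearEquivOfInjective T hT (by simpa using hcard)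
  let b := Module.Basis.ofEquivFun E
  refine ⟨b.reindex (Fintype.equivFinOfCardEq hcard.symm), fun i => ?_⟩
  have : (b.reindex (Fintype.equivFinOfCardEq hcard.symm)).coord i =
      ((Fintype.equivFinOfCardEq hcard.symm).symm i).1 := by
    ext α
    simp only [Module.Basis.coord_apply, Module.Basis.repr_reindex_apply]
    simp only [b, Module.Basis.ofEquivFun_repr_apply]
    rfl
  rw [this]
  obtain ⟨j, hj, hje⟩ := hBJ ((Fintype.equivFinOfCardEq hcard.symm).symm i).2
  rw [← hje]
  exact hexp j hj

end LinearAlgebra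

end Paper.Sharp

namespace Paper.Sharp

open SimpleGraph

variable {V : Type*} [Fintype V] {w : V → V → ℝ} {μ : V → ℝ} {d : V → V → ℝ}

lemma deg_le_degMax (x : V) : deg w x ≤ degMax w :=
  le_ciSup (f := fun x => deg w x) (Set.finite_range _).bddAbove x

/-! ### Harmonic forms and the functionals given by edges -/

/-- The set of harmonic 1-forms as a linear subspace. -/
def harm (w : V → V → ℝ) (μ : V → ℝ) (d : V → V → ℝ) : Submodule ℝ (V → V → ℝ) where
  carrier := H1set w μ d
  zero_mem' := by simp [H1set]
  add_mem' := by
    rintro α β ⟨h1, h2, h3, h4⟩ ⟨k1, k2, k3, k4⟩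
    refine ⟨fun x y => ?_, fun x y h => ?_, fun n c hc hX => ?_, fun x => ?_⟩
    · simp only [Pi.add_apply]; rw [h1 x y, k1 x y]; ring
    · simp [h2 x y h, k2 x y h]
    · simp [Finset.sum_add_distrib, h3 n c hc hX, k3 n c hc hX]
    · simp [mul_add, Finset.sum_add_distrib, h4 x, k4 x]
  smul_mem' := by
    rintro a α ⟨h1, h2, h3, h4⟩
    refine ⟨fun x y => ?_, fun x y h => ?_, fun n c hc hX => ?_, fun x => ?_⟩
    · simp only [Pi.smul_apply, smul_eq_mul]; rw [h1 x y]; ring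
    · simp [h2 x y h]
    · simp [← Finset.mul_sum, h3 n c hc hX]
    · simp only [Pi.smul_apply, smul_eq_mul, mul_left_comm _ a]
      rw [← Finset.mul_sum, h4 x, mul_zero]

lemma betti1_eq : betti1 w μ d = Module.finrank ℝ (harm w μ d) := by
  unfold betti1
  rw [show H1set w μ d = (harm w μ d : Set (V → V → ℝ)) from rfl, Submodule.span_eq]

/-- The value of a harmonic form on the edge `(x, y)` per unit length. For non-adjacent `x, y`, in
particular for `x = y`, this is `0`. -/
noncomputable def edgeFun (w : V → V → ℝ) (μ : V → ℝ) (d : V → V → ℝ) (p : V × V) :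
    harm w μ d →ₗ[ℝ] ℝ where
  toFun α := α.1 p.1 p.2 / d p.1 p.2
  map_add' α β := by simp [add_div]
  map_smul' c α := by simp [mul_div_assoc]

lemma edgeFun_apply (x y : V) (α : harm w μ d) : edgeFun w μ d (x, y) α = α.1 x y / d x y := rfl

namespace Good

lemma edgeFun_swap (S : Good w μ d) (x y : V) :
    edgeFun w μ d (x, y) = - edgeFun w μ d (y, x) := by
  ext α
  simp only [LinearMap.neg_apply, edgeFun_apply]
  rw [α.2.1 x y, S.d_symm x y, neg_div]

lemma edgeFun_self (_S : Good w μ d) (x : V) : edgeFun w μ d (x, x) = 0 := by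
  ext α
  simp [edgeFun_apply, anti_self α.2]

lemma eq_zero_of_edgeFun (S : Good w μ d) (α : harm w μ d) (h : ∀ p, edgeFun w μ d p α = 0) :
    α = 0 := by
  ext x y
  by_cases hxy : Adj w x y
  · have := h (x, y)
    rw [edgeFun_apply, div_eq_zero_iff] at this
    exact this.resolve_right (S.d_pos_of_adj hxy).ne'
  · exact α.2.2.1 x y hxy

end Good

/-- The sup norm of a harmonic form, every edge being given its length. By antisymmetry of the form
no absolute values are needed. -/
noncomputable def gauge [Nonempty V] (w : V → V → ℝ) (μ : V → ℝ) (d : V → V → ℝ)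
    (α : harm w μ d) : ℝ :=
  Finset.univ.sup' Finset.univ_nonempty fun p : V × V => edgeFun w μ d p α

variable [Nonempty V]

lemma edgeFun_le_gauge (p : V × V) (α : harm w μ d) : edgeFun w μ d p α ≤ gauge w μ d α :=
  Finset.le_sup' (fun p : V × V => edgeFun w μ d p α) (Finset.mem_univ p)

lemma exists_edgeFun_eq_gauge (α : harm w μ d) : ∃ p, edgeFun w μ d p α = gauge w μ d α := by
  obtain ⟨p, -, hp⟩ := Finset.exists_mem_eq_sup' Finset.univ_nonempty
    fun p : V × V => edgeFun w μ d p α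
  exact ⟨p, hp.symm⟩

namespace Good

lemma gauge_nonneg (S : Good w μ d) (α : harm w μ d) : 0 ≤ gauge w μ d α := by
  have x : V := Classical.arbitrary V
  have := edgeFun_le_gauge (x, x) α
  rwa [S.edgeFun_self] at this

lemma gauge_neg (S : Good w μ d) (α : harm w μ d) : gauge w μ d (-α) = gauge w μ d α := by
  have key : ∀ α : harm w μ d, gauge w μ d (-α) ≤ gauge w μ d α := by
    intro α
    obtain ⟨⟨x, y⟩, h⟩ := exists_edgeFun_eq_gauge (-α)
    rw [← h, S.edgeFun_swap, LinearMap.neg_apply, map_neg, neg_neg]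
    exact edgeFun_le_gauge _ _
  refine le_antisymm (key α) ?_
  have := key (-α)
  rwa [neg_neg] at this

lemma exposed_neg (S : Good w μ d) {u : harm w μ d →ₗ[ℝ] ℝ} (h : Exposed (gauge w μ d) u) :
    Exposed (gauge w μ d) (-u) := by
  obtain ⟨α, hα⟩ := h
  refine ⟨-α, fun β => ?_⟩
  obtain ⟨t, ht, h⟩ := hα (-β)
  refine ⟨t, ht, ?_⟩
  have e : -α + t • β = -(α + t • (-β)) := by simp [add_comm]
  rw [e, S.gauge_neg, h]
  simp

/-- Every nonzero exposed functional is realised by an edge at every vertex. The exposing form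
attains its norm on some edge at `x` by `exists_tight`, and the corresponding edge functional is
then dominated by `u`, hence equal to it. -/
lemma exists_edge_of_exposed (S : Good w μ d) {u : harm w μ d →ₗ[ℝ] ℝ}
    (h : Exposed (gauge w μ d) u) (hu : u ≠ 0) (x : V) :
    ∃ y, Adj w x y ∧ edgeFun w μ d (x, y) = u := by
  obtain ⟨α, hα⟩ := h
  have hα0 : gauge w μ d α = u α := by
    obtain ⟨t, -, h⟩ := hα 0
    simpa using h
  have hpos : 0 < gauge w μ d α := by
    refine lt_of_le_of_ne (S.gauge_nonneg α) fun h0 => hu ?_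
    have hα00 : α = 0 := by
      refine S.eq_zero_of_edgeFun α fun ⟨x, y⟩ => ?_
      have h1 := edgeFun_le_gauge (x, y) α
      have h2 := edgeFun_le_gauge (y, x) α
      rw [S.edgeFun_swap, LinearMap.neg_apply] at h2
      linarith
    have hge : ∀ β, 0 ≤ u β := by
      intro β
      obtain ⟨t, ht, h⟩ := hα β
      rw [hα00, zero_add, map_smul, smul_eq_mul] at h
      exact nonneg_of_mul_nonneg_right (h ▸ S.gauge_nonneg _) ht
    ext β
    have h1 := hge β
    have h2 := hge (-β)
    rw [map_neg] at h2
    simp only [LinearMap.zero_apply]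
    linarith
  have hle : ∀ a b, Adj w a b → α.1 a b ≤ gauge w μ d α * d a b := by
    intro a b hab
    have := edgeFun_le_gauge (a, b) α
    rwa [edgeFun_apply, div_le_iff₀ (S.d_pos_of_adj hab)] at this
  obtain ⟨⟨a, b⟩, hab⟩ := exists_edgeFun_eq_gauge α
  have hadj : Adj w a b := by
    by_contra hn
    rw [edgeFun_apply, α.2.2.1 a b hn, zero_div] at hab
    exact hpos.ne hab
  have hmem : (-α).1 ∈ H1set w μ d := (-α).2
  have hval : ∀ a b, (-α).1 a b = α.1 b a := by
    intro a b
    rw [α.2.1 b a]; rfl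
  have hT : Tight w d (-α).1 (gauge w μ d α) b a := by
    refine ⟨S.adj_symm hadj, ?_⟩
    rw [edgeFun_apply, div_eq_iff (S.d_pos_of_adj hadj).ne'] at hab
    rw [hval, hab, S.d_symm]
  -- `exists_tight` produces incoming edges, so it is applied to `-α`.
  obtain ⟨y, hy, hyx⟩ := S.exists_tight hmem hpos
    (fun a b hab => by rw [hval, S.d_symm]; exact hle b a (S.adj_symm hab)) hT x
  refine ⟨y, S.adj_symm hy, ?_⟩
  have hey : edgeFun w μ d (x, y) α = gauge w μ d α := by
    rw [edgeFun_apply, div_eq_iff (S.d_pos_of_adj (S.adj_symm hy)).ne', ← hval, hyx, S.d_symm]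
  have hle' : ∀ β, edgeFun w μ d (x, y) β ≤ u β := by
    intro β
    obtain ⟨t, ht, h⟩ := hα β
    have h1 := edgeFun_le_gauge (x, y) (α + t • β)
    rw [h, map_add, map_add, hey, hα0, map_smul, map_smul, smul_eq_mul, smul_eq_mul] at h1
    exact le_of_mul_le_mul_left (by linarith) ht
  ext β
  refine le_antisymm (hle' β) ?_
  have := hle' (-β)
  rw [map_neg, map_neg] at this
  linarith

/-! ### Counting neighbours -/

/-- In the sharp case the edges at each vertex are labelled bijectively by the signed coordinate
functionals of a basis `a` of the harmonic forms. The edges with label `i` form a permutation. -/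
lemma exists_perms (S : Good w μ d) (m : ℕ) (hm : degMax w = 2 * m)
    (hsharp : 2 * betti1 w μ d = degMax w) :
    ∃ (φ : Fin m → Equiv.Perm V) (a : Fin m → V → V → ℝ), (∀ i, a i ∈ H1set w μ d) ∧
      (∀ i x, Adj w x (φ i x)) ∧ (∀ x y, Adj w x y → ∃ i, y = φ i x ∨ x = φ i y) ∧
      ∀ i j x, a j x (φ i x) = if i = j then d x (φ i x) else 0 := by
  classical
  obtain rfl : m = Module.finrank ℝ (harm w μ d) := by
    rw [← betti1_eq]; omega
  obtain ⟨b, hb⟩ := exists_exposed_basis (edgeFun w μ d) (gauge w μ d) edgeFun_le_gauge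
    exists_edgeFun_eq_gauge S.eq_zero_of_edgeFun
  have hcoord : ∀ i j, b.coord i (b j) = if i = j then 1 else 0 := by
    intro i j
    simp [Finsupp.single_apply, eq_comm]
  have hb0 : ∀ i, b.coord i ≠ 0 := by
    intro i h
    have := hcoord i i
    rw [h] at this
    simp at this
  let σ : Fin _ ⊕ Fin _ → (harm w μ d →ₗ[ℝ] ℝ) := Sum.elim b.coord fun i => - b.coord i
  have hσ : Function.Injective σ := by
    rintro (i | i) (j | j) h <;> by_cases hij : i = j <;>
      have h1 := congrArg (fun u => u (b i)) h <;>
      simp [σ, hij] at h1 ⊢ <;>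
      norm_num at h1
  have hN : ∀ x s, ∃ y, Adj w x y ∧ edgeFun w μ d (x, y) = σ s := by
    rintro x (i | i)
    · exact S.exists_edge_of_exposed (hb i) (hb0 i) x
    · exact S.exists_edge_of_exposed (S.exposed_neg (hb i)) (neg_ne_zero.2 (hb0 i)) x
  choose N hN1 hN2 using hN
  have hsurj : ∀ x y, Adj w x y → ∃ s, N x s = y := by
    intro x
    let g : Fin (Module.finrank ℝ (harm w μ d)) ⊕ Fin (Module.finrank ℝ (harm w μ d)) →
        {y // Adj w x y} := fun s => ⟨N x s, hN1 x s⟩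
    have hg : Function.Injective g := by
      intro s t hst
      apply hσ
      rw [← hN2 x s, ← hN2 x t]
      have : N x s = N x t := congrArg Subtype.val hst
      rw [this]
    have hcard : Nat.card {y // Adj w x y} ≤ Nat.card
        (Fin (Module.finrank ℝ (harm w μ d)) ⊕ Fin (Module.finrank ℝ (harm w μ d))) := by
      have : deg w x ≤ degMax w := deg_le_degMax x
      rw [hm] at this
      simpa [deg, two_mul] using this
    intro y hy
    have hbij := hg.bijective_of_nat_card_le hcard
    obtain ⟨s, hs⟩ := hbij.2 ⟨y, hy⟩
    exact ⟨s, congrArg Subtype.val hs⟩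
  have huniq : ∀ x y y', Adj w x y → Adj w x y' →
      edgeFun w μ d (x, y) = edgeFun w μ d (x, y') → y = y' := by
    intro x y y' hy hy' h
    obtain ⟨s, rfl⟩ := hsurj x y hy
    obtain ⟨t, rfl⟩ := hsurj x y' hy'
    rw [hN2, hN2] at h
    rw [hσ h]
  have hinj : ∀ i, Function.Injective fun x => N x (Sum.inl i) := by
    intro i x x' h
    simp only at h
    have h1 := hN1 x (Sum.inl i)
    have h2 := hN1 x' (Sum.inl i)
    have h3 := hN2 x (Sum.inl i)
    have h4 := hN2 x' (Sum.inl i)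
    rw [S.edgeFun_swap] at h3 h4
    rw [← h] at h2 h4
    exact huniq _ _ _ (S.adj_symm h1) (S.adj_symm h2) (neg_injective (h3.trans h4.symm))
  refine ⟨fun i => Equiv.ofBijective _ (Finite.injective_iff_bijective.1 (hinj i)),
    fun i => (b i).1, fun i => (b i).2, fun i x => hN1 x (Sum.inl i), fun x y hxy => ?_,
    fun i j x => ?_⟩
  · obtain ⟨s | s, rfl⟩ := hsurj x y hxy
    · exact ⟨s, Or.inl rfl⟩
    · refine ⟨s, Or.inr ?_⟩
      refine huniq (N x (Sum.inr s)) _ _ (S.adj_symm hxy) (hN1 _ (Sum.inl s)) ?_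
      rw [S.edgeFun_swap, hN2]
      exact (neg_neg _).trans (hN2 _ (Sum.inl s)).symm
  · have h1 := congrArg (fun u => u (b j)) (hN2 x (Sum.inl i))
    simp only [edgeFun_apply, σ, Sum.elim_inl, hcoord,
      div_eq_iff (S.d_pos_of_adj (hN1 x (Sum.inl i))).ne'] at h1
    simp only [Equiv.ofBijective_apply, h1]
    split_ifs <;> simp

end Good

end Paper.Sharp

namespace Paper.Sharp

open SimpleGraph

variable {V : Type*} [Fintype V] {w : V → V → ℝ} {μ : V → ℝ} {d : V → V → ℝ}

/-! ### Commutation and the Cayley graph -/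

namespace Good

variable {m : ℕ} {φ : Fin m → Equiv.Perm V} {a : Fin m → V → V → ℝ}

/-- There is a geodesic from `φ j x` to `φ j (φ i x)` which is as long as the edge labelled `i` at
`x` and starts with the edge labelled `i` at `φ j x`. The rest of it joins `φ i (φ j x)` to
`φ j (φ i x)`. -/
lemma commute_aux (S : Good w μ d) (ha : ∀ i, a i ∈ H1set w μ d) (hφ : ∀ i x, Adj w x (φ i x))
    (hadj : ∀ x y, Adj w x y → ∃ i, y = φ i x ∨ x = φ i y)
    (hval : ∀ i j x, a j x (φ i x) = if i = j then d x (φ i x) else 0)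
    {i j : Fin m} (hij : i ≠ j) (x : V) :
    d (φ j x) (φ i (φ j x)) + d (φ i (φ j x)) (φ j (φ i x)) ≤ d x (φ i x) := by
  -- The form `a k` is at most the length, with equality exactly on the edges labelled `k`.
  have hM : ∀ k x y, Adj w x y → a k x y ≤ 1 * d x y := by
    intro k x y hxy
    rw [one_mul]
    obtain ⟨l, rfl | rfl⟩ := hadj x y hxy
    · rw [hval]
      split_ifs
      exacts [le_rfl, S.d_nonneg _ _]
    · rw [(ha k).1, hval]
      have := S.d_nonneg y (φ l y)
      have := S.d_nonneg (φ l y) y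
      split_ifs <;> linarith
  have hpos : ∀ k x y, Adj w x y → 0 < a k x y → y = φ k x := by
    intro k x y hxy h
    obtain ⟨l, rfl | rfl⟩ := hadj x y hxy
    · rw [hval] at h
      split_ifs at h with hl
      · rw [hl]
      · exact absurd h (lt_irrefl _)
    · rw [(ha k).1, hval] at h
      have := S.d_nonneg y (φ l y)
      split_ifs at h <;> linarith
  have htight : ∀ k x y, Tight w d (a k) 1 x y → y = φ k x := by
    intro k x y h
    refine hpos k x y h.1 ?_
    rw [h.2, one_mul]
    exact S.d_pos_of_adj h.1
  have hzero : ∀ {u v : V} (p : S.graph.Walk u v), wsum (a i) p = 1 * wsum d p →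
      wsum (a j) p = 0 := by
    intro u v p
    induction p with
    | nil => simp
    | cons h p ih =>
      intro hp
      obtain ⟨h1, h2⟩ := S.tight_of_cons (hM i) h p hp
      rw [wsum_cons, ih h2, add_zero, htight i _ _ h1, hval, if_neg hij]
  have hxy : Tight w d (a i) 1 x (φ i x) := ⟨hφ i x, by rw [hval, if_pos rfl, one_mul]⟩
  have hz' := hφ j (φ i x)
  obtain ⟨z, hz, hzeq⟩ := S.exists_pred (ha i) one_pos (hM i) hxy (Or.inr hz')
  obtain ⟨r, hr, hrw⟩ := S.geod_ball hxy.1 hz (Or.inr hz')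
  have hri : wsum (a i) r = 1 * wsum d r := by rw [hrw _ (ha i), hzeq, hr]
  have hrj := hzero r hri
  rw [hrw _ (ha j), hval, hval, if_neg hij, if_pos rfl] at hrj
  have hlt := S.d_pos_of_adj hz'
  have hzx : z = φ j x := by
    rcases hz with rfl | hz
    · rw [anti_self (ha j)] at hrj
      linarith
    · refine hpos j x z (S.adj_symm hz) ?_
      rw [(ha j).1]
      linarith
  subst hzx
  have hlen : wsum d r = d x (φ i x) := by
    rw [hr, ← one_mul (d (φ j x) _), ← hzeq, (ha i).1, hval, hval, hval, if_pos rfl,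
      if_neg (Ne.symm hij), if_neg (Ne.symm hij)]
    ring
  clear hr hrw hrj hzeq hz
  rw [← hlen]
  generalize φ j x = z at *
  generalize φ j (φ i x) = z' at *
  cases r with
  | nil =>
    have := S.d_pos_of_adj (hφ i x)
    rw [wsum_nil] at hlen
    linarith
  | cons h p =>
    have := htight i _ _ (S.tight_of_cons (hM i) h p hri).1
    subst this
    rw [wsum_cons]
    linarith [S.d_le_wsum p]

/-- Summing `commute_aux` over all vertices leaves no room for the distance between
`φ i (φ j x)` and `φ j (φ i x)`, because `φ j` permutes the edges labelled `i`. -/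
lemma commute (S : Good w μ d) (ha : ∀ i, a i ∈ H1set w μ d) (hφ : ∀ i x, Adj w x (φ i x))
    (hadj : ∀ x y, Adj w x y → ∃ i, y = φ i x ∨ x = φ i y)
    (hval : ∀ i j x, a j x (φ i x) = if i = j then d x (φ i x) else 0) (i j : Fin m) (x : V) :
    φ i (φ j x) = φ j (φ i x) := by
  by_cases hij : i = j
  · rw [hij]
  have h := fun x => S.commute_aux ha hφ hadj hval hij x
  have h1 := Finset.sum_le_sum fun x (_ : x ∈ Finset.univ) => h x
  rw [Finset.sum_add_distrib, Equiv.sum_comp (φ j) fun y => d y (φ i y)] at h1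
  have h2 : ∀ x ∈ Finset.univ, 0 ≤ d (φ i (φ j x)) (φ j (φ i x)) := fun x _ => S.d_nonneg _ _
  have h3 : ∑ x, d (φ i (φ j x)) (φ j (φ i x)) = 0 :=
    le_antisymm (by linarith) (Finset.sum_nonneg h2)
  exact (S.pd.2.1 _ _).1 ((Finset.sum_eq_zero_iff_of_nonneg h2).1 h3 x (Finset.mem_univ x))

end Good

/-- A transitive abelian permutation group is regular, so evaluation at a vertex identifies it with
the vertex set. Under this identification adjacency becomes that of the Cayley graph. -/
lemma exists_cayley {V : Type*} [Nonempty V] {w : V → V → ℝ} (hconn : GraphConnected w)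
    {m : ℕ} {φ : Fin m → Equiv.Perm V}
    (hadj : ∀ x y, Adj w x y ↔ ∃ i, y = φ i x ∨ x = φ i y)
    (hcomm : ∀ i j, φ i * φ j = φ j * φ i) :
    ∃ Ψ : V ≃ Subgroup.closure (Set.range φ),
      ∀ x y : V, Adj w x y ↔
        ∃ i : Fin m, (Ψ y : Equiv.Perm V) = φ i * (Ψ x : Equiv.Perm V) ∨
          (Ψ y : Equiv.Perm V) = (φ i)⁻¹ * (Ψ x : Equiv.Perm V) := by
  obtain ⟨o⟩ := ‹Nonempty V›
  have hφmem : ∀ i, φ i ∈ Subgroup.closure (Set.range φ) := fun i =>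
    Subgroup.subset_closure ⟨i, rfl⟩
  have hab : ∀ s ∈ Subgroup.closure (Set.range φ), ∀ t ∈ Subgroup.closure (Set.range φ),
      s * t = t * s := by
    have hc : IsMulCommutative (Subgroup.closure (Set.range φ)) :=
      Subgroup.isMulCommutative_closure (by rintro _ ⟨i, rfl⟩ _ ⟨j, rfl⟩; exact hcomm i j)
    intro s hs t ht
    exact congrArg Subtype.val (hc.is_comm.comm ⟨s, hs⟩ ⟨t, ht⟩)
  have htrans : ∀ v, ∃ s ∈ Subgroup.closure (Set.range φ), s o = v := by
    intro v
    obtain ⟨n, c, h0, hn, hc⟩ := hconn o v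
    have : ∀ k : Fin (n + 1), ∃ s ∈ Subgroup.closure (Set.range φ), s o = c k := by
      intro k
      induction k using Fin.induction with
      | zero => exact ⟨1, one_mem _, by simp [h0]⟩
      | succ k ih =>
        obtain ⟨s, hs, hso⟩ := ih
        obtain ⟨i, hi | hi⟩ := (hadj _ _).1 (hc k)
        · exact ⟨φ i * s, mul_mem (hφmem i) hs, by simp [hso, hi]⟩
        · exact ⟨(φ i)⁻¹ * s, mul_mem (inv_mem (hφmem i)) hs, by simp [hso, hi]⟩
    rw [← hn]
    exact this _
  have hinj : ∀ s ∈ Subgroup.closure (Set.range φ), ∀ t ∈ Subgroup.closure (Set.range φ),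
      s o = t o → s = t := by
    intro s hs t ht h
    ext v
    obtain ⟨r, hr, rfl⟩ := htrans v
    rw [← Equiv.Perm.mul_apply, ← Equiv.Perm.mul_apply, hab s hs r hr, hab t ht r hr,
      Equiv.Perm.mul_apply, Equiv.Perm.mul_apply, h]
  let ev : Subgroup.closure (Set.range φ) ≃ V := Equiv.ofBijective (fun s => s.1 o)
    ⟨fun s t h => Subtype.ext (hinj _ s.2 _ t.2 h), fun v => by
      obtain ⟨s, hs, h⟩ := htrans v
      exact ⟨⟨s, hs⟩, h⟩⟩
  have hev : ∀ x, (ev.symm x).1 o = x := ev.apply_symm_apply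
  refine ⟨ev.symm, fun x y => ?_⟩
  rw [hadj]
  refine exists_congr fun i => or_congr ⟨fun h => ?_, fun h => ?_⟩ ⟨fun h => ?_, fun h => ?_⟩
  · refine hinj _ (ev.symm y).2 _ (mul_mem (hφmem i) (ev.symm x).2) ?_
    rw [Equiv.Perm.mul_apply, hev, hev, h]
  · have := congrArg (fun s : Equiv.Perm V => s o) h
    simpa only [Equiv.Perm.mul_apply, hev] using this
  · refine hinj _ (ev.symm y).2 _ (mul_mem (inv_mem (hφmem i)) (ev.symm x).2) ?_
    rw [Equiv.Perm.mul_apply, hev, hev, h, Equiv.Perm.inv_def, Equiv.symm_apply_apply]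
  · have := congrArg (fun s : Equiv.Perm V => s o) h
    simp only [Equiv.Perm.mul_apply, hev] at this
    rw [this, Equiv.Perm.inv_def, Equiv.apply_symm_apply]

end Paper.Sharp

open Paper in
/-- **Theorem (Ollivier-Betti sharp graphs are abelian Cayley graphs).**
Let `G = (V, w, μ)` be a finite connected weighted graph with a general path distance `d`
which is Ollivier-Betti sharp, and set `m = deg_max / 2`. Then there exist graph
automorphisms `φ₁,…,φ_m` of `G`, pairwise commuting (so that `S = ⟨φ₁,…,φ_m⟩` is an abelian
subgroup of the automorphism group), such that `G` is graph-isomorphic to the Cayley graph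
`Cay(S, {φ₁,…,φ_m})`. -/
theorem ollivierBettiSharp_isomorphic_to_abelian_Cayley
    {V : Type*} [Fintype V] [Nonempty V] (w : V → V → ℝ) (μ : V → ℝ) (d : V → V → ℝ)
    (hG : IsWeightedGraph w μ) (hconn : GraphConnected w) (hd : IsPathDistance w d)
    (hcurv : NonnegCurv w μ d) (m : ℕ) (hm : degMax w = 2 * m)
    (hsharp : 2 * betti1 w μ d = degMax w) :
    ∃ φ : Fin m → Equiv.Perm V,
      (∀ (i : Fin m) (x y : V), Adj w x y ↔ Adj w (φ i x) (φ i y)) ∧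
      (∀ i j : Fin m, φ i * φ j = φ j * φ i) ∧
      ∃ Ψ : V ≃ Subgroup.closure (Set.range φ),
        ∀ x y : V, Adj w x y ↔
          ∃ i : Fin m, (Ψ y : Equiv.Perm V) = φ i * (Ψ x : Equiv.Perm V) ∨
            (Ψ y : Equiv.Perm V) = (φ i)⁻¹ * (Ψ x : Equiv.Perm V) := by
  have S : Sharp.Good w μ d := ⟨hG, hconn, hd, hcurv⟩
  obtain ⟨φ, a, ha, hφ, hadj, hval⟩ := S.exists_perms m hm hsharp
  have hcomm := S.commute ha hφ hadj hval
  have hadj' : ∀ x y, Adj w x y ↔ ∃ i, y = φ i x ∨ x = φ i y := by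
    refine fun x y => ⟨hadj x y, ?_⟩
    rintro ⟨i, rfl | rfl⟩
    · exact hφ i x
    · exact S.adj_symm (hφ i y)
  have hmul : ∀ i j, φ i * φ j = φ j * φ i := fun i j => Equiv.ext (hcomm i j)
  refine ⟨φ, fun i x y => ?_, hmul, Sharp.exists_cayley hconn hadj' hmul⟩
  rw [hadj', hadj']
  refine exists_congr fun j => ?_
  rw [← hcomm i j x, ← hcomm i j y, (φ i).injective.eq_iff, (φ i).injective.eq_iff]
end

section
/- Let G=(V,w,μ,d) be a finite connected weighted graph with a general path distance and non-negative Ollivier curvature. Let α∈H₁(M₂(G)) with ‖α‖_∞=1, where ‖α‖_∞=sup_{x∼y} α(x,y)/d(x,y). Then for every vertex x there exist y,z with x∼y and x∼z such that α(x,y)/d(x,y) = α(z,x)/d(z,x) = 1. -/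
/-!
Call an edge `x → y` with `α x y = d x y` maximal; by finiteness there is one. The proof combines
a local rigidity statement with a global argument about directed paths of maximal edges.

*Local potential.* Let `x → y` be maximal, `x'` in the closed neighbourhood of `x` and `y'` in that
of `y`. Closedness of `α` on `X₂` gives `α x' x + α x y + α y y' ≤ d x' y'`, and in the case of
equality there is a path of maximal edges from `x'` to `y'` of length `d x' y'`
(`Setup.good_three`); call the pair `(x', y')` tight in this case. So `α` has a primitive near the
edge which is `1`-Lipschitz and harmonic at `x` and `y`: an extremal test function for the
curvature. Perturbing it to first order (`Setup.perturb`) shows: if `q y' ≤ p x'` for all tight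
pairs, `q` takes on the closed neighbourhood of `y` no value larger than `q y` along maximal edges,
and `p x = q y`, then `Δ q y ≤ Δ p x`. In particular every neighbour `x'` of `x` has a tight partner
`y'` (`Setup.exists_match`).

*Long paths.* Let `N v` be the supremal length of a path of maximal edges starting in `v`. If `N`
were finite everywhere, the perturbation statement with `q = N + α y ·` and
`p = N + α x · - d x y` would show that `Δ N` does not increase along the first edge of a longest
path; as `Δ N ≥ 0` where `N = 0`, it follows that `N` is subharmonic, hence constant, contradicting
the strict decrease of `N` along a maximal edge. So `N` is infinite somewhere
(`Setup.exists_not_bdd`). The tight partners show that infiniteness of `N` passes to neighbours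
(`Setup.not_bdd_of_adj`): otherwise, following an infinite path of maximal edges and the tight
partners next to it, the bounded quantity `N x' + α x x'` would decrease forever. Hence `N` is
infinite everywhere, and every vertex is the start of a maximal edge. Applying this to `-α` gives
the edges ending in a given vertex.
-/


open Finset

namespace Paper

/-! ### Maximal edges and the lengths of their paths -/

/-- A harmonic form in `H₁(M₂(G))` bounded by `1`, on a connected graph with a path distance and
non-negative Ollivier curvature. -/
structure Setup {V : Type*} [Fintype V] (w : V → V → ℝ) (μ : V → ℝ) (d : V → V → ℝ)
    (α : V → V → ℝ) : Prop where
  hG : IsWeightedGraph w μ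
  hconn : GraphConnected w
  hd : IsPathDistance w d
  hcurv : NonnegCurv w μ d
  hα : α ∈ H1set w μ d
  le : ∀ x y, Adj w x y → α x y ≤ d x y

/-- A directed edge on which `α` attains its maximal possible value. -/
def MaxEdge {V : Type*} (w d α : V → V → ℝ) (x y : V) : Prop := Adj w x y ∧ α x y = d x y

/-- `MaxPath w d α a b ℓ`: there is a directed path of maximal edges from `a` to `b`, of total
length `ℓ`. -/
inductive MaxPath {V : Type*} (w d α : V → V → ℝ) : V → V → ℝ → Prop
  | nil (a : V) : MaxPath w d α a a 0
  | cons {a b c : V} {s : ℝ} : MaxEdge w d α a b → MaxPath w d α b c s →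
      MaxPath w d α a c (d a b + s)

/-- Membership of `y` in the closed neighbourhood of `x`. -/
def Nbr {V : Type*} (w : V → V → ℝ) (x y : V) : Prop := y = x ∨ Adj w x y

/-- The number `s`, thought of as the integral of `α` along some path from `a` to `b`, is at most
`d a b`, and in the case of equality the distance is realised by a path of maximal edges. -/
def Good {V : Type*} (w d α : V → V → ℝ) (a b : V) (s : ℝ) : Prop :=
  s ≤ d a b ∧ (s = d a b → MaxPath w d α a b (d a b))

theorem MaxPath.append {V : Type*} {w d α : V → V → ℝ} {a b c : V} {s t : ℝ}
    (h : MaxPath w d α a b s) (h' : MaxPath w d α b c t) : MaxPath w d α a c (s + t) := by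
  induction h with
  | nil a => simpa using h'
  | cons e _ ih => rw [add_assoc]; exact .cons e (ih h')

section

variable {V : Type*} {w d α : V → V → ℝ}

theorem Good.trans {a b c : V} {s t : ℝ} (h : Good w d α a b s)
    (hbc : Good w d α b c t) (hd : d a b + d b c = d a c) : Good w d α a c (s + t) := by
  refine ⟨by linarith [h.1, hbc.1], fun heq => ?_⟩
  rw [← hd]
  exact (h.2 (by linarith [h.1, hbc.1])).append (hbc.2 (by linarith [hbc.1, h.1]))

/-- The lengths of the paths of maximal edges that start in `v`. -/
def lens (w d α : V → V → ℝ) (v : V) : Set ℝ := { s | ∃ e, MaxPath w d α v e s }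

/-- The supremal length of a path of maximal edges starting in `v`; it is only meaningful if these
lengths are bounded. -/
noncomputable def maxLen (w d α : V → V → ℝ) (v : V) : ℝ := sSup (lens w d α v)

theorem zero_mem_lens (v : V) : (0 : ℝ) ∈ lens w d α v := ⟨v, .nil v⟩

theorem mem_lens {x : V} {s : ℝ} (h : s ∈ lens w d α x) :
    s = 0 ∨ ∃ y t, MaxEdge w d α x y ∧ t ∈ lens w d α y ∧ s = d x y + t := by
  obtain ⟨e, h⟩ := h
  cases h with
  | nil => exact .inl rfl
  | cons hxy h => exact .inr ⟨_, _, hxy, ⟨_, h⟩, rfl⟩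

theorem bdd_of_maxPath {x y : V} {s : ℝ} (h : MaxPath w d α x y s)
    (hx : BddAbove (lens w d α x)) : BddAbove (lens w d α y) := by
  obtain ⟨B, hB⟩ := hx
  refine ⟨B - s, ?_⟩
  rintro t ⟨e, ht⟩
  linarith [hB ⟨e, h.append ht⟩]

theorem add_maxLen_le {x y : V} {s : ℝ} (h : MaxPath w d α x y s)
    (hx : BddAbove (lens w d α x)) : s + maxLen w d α y ≤ maxLen w d α x := by
  suffices maxLen w d α y ≤ maxLen w d α x - s by linarith
  refine csSup_le ⟨0, zero_mem_lens y⟩ ?_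
  rintro t ⟨e, ht⟩
  have := le_csSup hx ⟨e, h.append ht⟩
  unfold maxLen
  linarith

end

namespace Setup

variable {V : Type*} [Fintype V] {w : V → V → ℝ} {μ : V → ℝ} {d α : V → V → ℝ}

theorem adj_symm (S : Setup w μ d α) {x y : V} (h : Adj w x y) : Adj w y x := by
  unfold Adj at *; rwa [S.hG.symm]

theorem adj_ne (S : Setup w μ d α) {x y : V} (h : Adj w x y) : x ≠ y := by
  rintro rfl; unfold Adj at h; rw [S.hG.loopless] at h; exact lt_irrefl _ h

theorem d_symm (S : Setup w μ d α) (x y : V) : d x y = d y x := S.hd.1 x y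

theorem d_self (S : Setup w μ d α) (x : V) : d x x = 0 := (S.hd.2.1 x x).2 rfl

theorem d_nonneg (S : Setup w μ d α) (x y : V) : 0 ≤ d x y := S.hd.2.2.1 x y

theorem d_pos (S : Setup w μ d α) {x y : V} (h : x ≠ y) : 0 < d x y :=
  lt_of_le_of_ne (S.d_nonneg x y) fun h' => h ((S.hd.2.1 x y).1 h'.symm)

theorem anti (S : Setup w μ d α) (x y : V) : α x y = -α y x := S.hα.1 x y

theorem self (S : Setup w μ d α) (x : V) : α x x = 0 := by
  have := S.anti x x; linarith

theorem nbr_symm (S : Setup w μ d α) {x y : V} (h : Nbr w x y) : Nbr w y x := by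
  rcases h with rfl | h
  · exact .inl rfl
  · exact .inr (S.adj_symm h)

/-! ### The distance and its geodesics -/

theorem d_le_add_of_adj (S : Setup w μ d α) {a b : V} (h : Adj w a b) (c : V) :
    d a c ≤ d a b + d b c := by
  suffices d a c - d a b ≤ d b c by linarith
  refine (S.hd.2.2.2 b c).2 ?_
  rintro s ⟨n, p, h0, hl, hp, rfl⟩
  suffices d a c ≤ d a b + ∑ i : Fin n, d (p i.castSucc) (p i.succ) by linarith
  refine (S.hd.2.2.2 a c).1 ⟨n + 1, Fin.cons a p, by simp, ?_, ?_, ?_⟩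
  · rw [← Fin.succ_last]; simpa using hl
  · intro i
    refine Fin.cases ?_ (fun j => ?_) i
    · simpa [h0] using h
    · simpa [← Fin.succ_castSucc] using hp j
  · rw [Fin.sum_univ_succ]
    simp [h0]

theorem tri (S : Setup w μ d α) (a b c : V) : d a c ≤ d a b + d b c := by
  suffices d a c - d b c ≤ d a b by linarith
  refine (S.hd.2.2.2 a b).2 ?_
  rintro s ⟨n, p, h0, hl, hp, rfl⟩
  suffices d a c ≤ ∑ i : Fin n, d (p i.castSucc) (p i.succ) + d b c by linarith
  induction n generalizing a with
  | zero =>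
    have : a = b := by rw [← h0, ← hl]; rfl
    simp [this]
  | succ n ih =>
    have h1 : Adj w a (p 1) := by simpa [h0] using hp 0
    have h2 := ih (p 1) (fun i => p i.succ) (by simp)
      (by simpa [Fin.succ_last] using hl) (fun i => by simpa using hp i.succ)
    rw [Fin.sum_univ_succ]
    have h3 := S.d_le_add_of_adj h1 c
    simp only [Fin.castSucc_zero, h0, Fin.succ_zero_eq_one] at h2 ⊢
    simp only [← Fin.succ_castSucc] at h2 ⊢
    linarith

/-- The first step of a geodesic. -/
theorem exists_step (S : Setup w μ d α) {a e : V} (h : a ≠ e) :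
    ∃ b, Adj w a b ∧ d a e = d a b + d b e := by
  classical
  have hne : (univ.filter fun b => Adj w a b).Nonempty := by
    obtain ⟨n, p, h0, hl, hp⟩ := S.hconn a e
    cases n with
    | zero => exact absurd (h0.symm.trans hl) h
    | succ n => exact ⟨p 1, by simpa [h0] using hp 0⟩
  obtain ⟨b, hb, hmin⟩ := exists_min_image _ (fun b => d a b + d b e) hne
  simp only [mem_filter, mem_univ, true_and] at hb hmin
  refine ⟨b, hb, le_antisymm (S.tri _ _ _) ?_⟩
  refine (S.hd.2.2.2 a e).2 ?_
  rintro s ⟨n, p, h0, hl, hp, rfl⟩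
  cases n with
  | zero => exact absurd (h0.symm.trans hl) h
  | succ n =>
    have h1 : Adj w a (p 1) := by simpa [h0] using hp 0
    have h2 : d (p 1) e ≤ ∑ i : Fin n, d (p i.succ.castSucc) (p i.succ.succ) :=
      (S.hd.2.2.2 (p 1) e).1 ⟨n, fun i => p i.succ, by simp,
        by simpa [Fin.succ_last] using hl, fun i => by simpa using hp i.succ, by simp⟩
    rw [Fin.sum_univ_succ]
    have h3 := hmin _ h1
    simp only [Fin.castSucc_zero, h0, Fin.succ_zero_eq_one]
    linarith

/-- `Geo w d a e m v`: the sequence `v 0 = e, v 1, …, v m = a` is a geodesic from `e` to `a`. -/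
def Geo (w d : V → V → ℝ) (a e : V) (m : ℕ) (v : ℕ → V) : Prop :=
  v 0 = e ∧ v m = a ∧ ∀ k < m, Adj w (v k) (v (k + 1)) ∧
    d (v k) a = d (v k) (v (k + 1)) + d (v (k + 1)) a

theorem exists_geo (S : Setup w μ d α) (a e : V) : ∃ m v, Geo w d a e m v := by
  classical
  by_contra hcon
  obtain ⟨e, he, hmin⟩ := exists_min_image (univ.filter fun e => ¬ ∃ m v, Geo w d a e m v)
    (fun e => d e a) ⟨e, by simpa using hcon⟩
  simp only [mem_filter, mem_univ, true_and] at he hmin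
  have hne : e ≠ a := by
    rintro rfl
    exact he ⟨0, fun _ => e, rfl, rfl, by simp⟩
  obtain ⟨b, hb, hd⟩ := S.exists_step hne
  have hpos := S.d_pos (S.adj_ne hb)
  have : ∃ m v, Geo w d a b m v := by
    by_contra h
    have := hmin b h
    linarith
  obtain ⟨m, v, h0, hm, hv⟩ := this
  refine he ⟨m + 1, fun k => Nat.casesOn k e v, rfl, hm, ?_⟩
  intro k hk
  cases k with
  | zero => simpa [h0] using ⟨hb, hd⟩
  | succ k => exact hv k (by omega)

section

variable {a e : V} {m : ℕ} {v : ℕ → V}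

theorem Geo.sum (S : Setup w μ d α) (g : Geo w d a e m v) {j : ℕ} (hj : j ≤ m) :
    d e a = ∑ k ∈ range j, d (v k) (v (k + 1)) + d (v j) a := by
  induction j with
  | zero => simp [g.1]
  | succ j ih =>
    rw [sum_range_succ, ih (by omega), (g.2.2 j (by omega)).2]; ring

theorem Geo.anti (S : Setup w μ d α) (g : Geo w d a e m v) {i j : ℕ} (hij : i < j) (hj : j ≤ m) :
    d (v j) a < d (v i) a := by
  induction j, hij using Nat.le_induction with
  | base =>
    have h := g.2.2 i (by omega)
    have := S.d_pos (S.adj_ne h.1)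
    linarith
  | succ j hij ih =>
    have h := g.2.2 j (by omega)
    have := S.d_pos (S.adj_ne h.1)
    have := ih (by omega)
    linarith

theorem Geo.inj (S : Setup w μ d α) (g : Geo w d a e m v) {i j : ℕ} (hi : i ≤ m) (hj : j ≤ m)
    (h : v i = v j) : i = j := by
  rcases lt_trichotomy i j with hlt | rfl | hlt
  · have := Geo.anti S g hlt hj; rw [h] at this; exact absurd this (lt_irrefl _)
  · rfl
  · have := Geo.anti S g hlt hi; rw [h] at this; exact absurd this (lt_irrefl _)

theorem Geo.mid (S : Setup w μ d α) (g : Geo w d a e m v) {j : ℕ} (hj : j ≤ m) :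
    d a e = d a (v j) + d (v j) e := by
  refine le_antisymm (S.tri _ _ _) ?_
  have h1 := Geo.sum S g hj
  have h2 : ∀ j, d e (v j) ≤ ∑ k ∈ range j, d (v k) (v (k + 1)) := by
    intro j
    induction j with
    | zero => simp [g.1, S.d_self]
    | succ j ih => rw [sum_range_succ]; linarith [S.tri e (v j) (v (j + 1))]
  have := h2 j
  rw [S.d_symm a e, S.d_symm a, S.d_symm _ e]
  linarith

/-- Integration of `α` against the direction of travel of `v`, i.e. from `a` to `e`. -/
theorem Geo.good (S : Setup w μ d α) (g : Geo w d a e m v) :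
    Good w d α a e (-∑ k ∈ range m, α (v k) (v (k + 1))) := by
  have hsum := Geo.sum S g le_rfl
  rw [g.2.1, S.d_self, add_zero] at hsum
  have hle : ∀ k ∈ range m, -α (v k) (v (k + 1)) ≤ d (v k) (v (k + 1)) := by
    intro k hk
    rw [← S.anti, S.d_symm]
    exact S.le _ _ (S.adj_symm (g.2.2 k (by simpa using hk)).1)
  rw [← sum_neg_distrib]
  unfold Good
  rw [S.d_symm a e, hsum]
  refine ⟨sum_le_sum hle, fun heq => ?_⟩
  have hall := (sum_eq_sum_iff_of_le hle).1 heq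
  have key : ∀ j ≤ m, MaxPath w d α (v j) e (∑ k ∈ range j, d (v k) (v (k + 1))) := by
    intro j
    induction j with
    | zero => intro _; rw [g.1]; exact .nil _
    | succ j ih =>
      intro hj
      rw [sum_range_succ, add_comm (∑ k ∈ range j, _), S.d_symm (v j)]
      refine .cons ⟨S.adj_symm (g.2.2 j (by omega)).1, ?_⟩ (ih (by omega))
      rw [S.anti, hall j (by simp; omega), S.d_symm]
  have := key m le_rfl
  rwa [g.2.1] at this

end

/-! ### Closedness of `α` along paths with two or three edges -/

/-- Closedness of `α` on a cycle of `X₂`, the cycle being given by a sequence indexed by `ℕ`. -/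
theorem cycle_sum (S : Setup w μ d α) (n : ℕ) (u : ℕ → V) (hu : u (n + 3) = u 0)
    (hinj : ∀ i < n + 3, ∀ j < n + 3, u i = u j → i = j)
    (hadj : ∀ k < n + 3, Adj w (u k) (u (k + 1)))
    (hX : n = 0 ∨ (d (u 0) (u 3) < d (u 0) (u 1) + d (u 1) (u 2) + d (u 2) (u 3) ∧
      ∑ k ∈ range n, d (u (k + 3)) (u (k + 3 + 1)) = d (u 3) (u 0))) :
    ∑ k ∈ range (n + 3), α (u k) (u (k + 1)) = 0 := by
  have hval : ∀ i : ZMod (n + 3), i.val < n + 3 := fun i => ZMod.val_lt i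
  have hsucc : ∀ i : ZMod (n + 3), u (i + 1).val = u (i.val + 1) := by
    intro i
    have : Fact (1 < n + 3) := ⟨by omega⟩
    rw [ZMod.val_add, ZMod.val_one]
    rcases (Nat.succ_le_of_lt (hval i)).lt_or_eq with h | h
    · rw [Nat.mod_eq_of_lt h]
    · rw [Nat.succ_eq_add_one] at h; rw [h, Nat.mod_self, hu]
  have hS : ∀ F : ℕ → ℝ, ∑ i : ZMod (n + 3), F i.val = ∑ k ∈ range (n + 3), F k := fun F =>
    Fin.sum_univ_eq_sum_range F (n + 3)
  have := S.hα.2.2.1 n (fun i => u i.val)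
    ⟨fun i j h => ZMod.val_injective _ (hinj _ (hval i) _ (hval j) h), fun i => by
      change Adj w (u i.val) (u (i + 1).val)
      rw [hsucc]; exact hadj _ (hval i)⟩ ?_
  · simp only [hsucc] at this
    rwa [hS fun k => α (u k) (u (k + 1))] at this
  · rcases hX with h | ⟨h1, h2⟩
    · exact .inl h
    by_cases hn : n = 0
    · exact .inl hn
    refine .inr ?_
    have v0 : (0 : ZMod (n + 3)).val = 0 := ZMod.val_zero
    have v1 : (1 : ZMod (n + 3)).val = 1 := by
      have := ZMod.val_natCast_of_lt (n := n + 3) (a := 1) (by omega); simpa using this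
    have v2 : (2 : ZMod (n + 3)).val = 2 := by
      have := ZMod.val_natCast_of_lt (n := n + 3) (a := 2) (by omega); simpa using this
    have v3 : (3 : ZMod (n + 3)).val = 3 := by
      have := ZMod.val_natCast_of_lt (n := n + 3) (a := 3) (by omega); simpa using this
    simp only [v0, v1, v2, v3, hsucc]
    refine ⟨h1, ?_⟩
    rw [← h2]
    have hiff : ∀ i : ZMod (n + 3), (i ≠ 0 ∧ i ≠ 1 ∧ i ≠ 2) ↔ 3 ≤ i.val := by
      intro i
      rw [← (ZMod.val_injective (n + 3)).ne_iff, ← (ZMod.val_injective (n + 3)).ne_iff (y := 1),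
        ← (ZMod.val_injective (n + 3)).ne_iff (y := 2), v0, v1, v2]
      omega
    simp only [hiff]
    rw [sum_filter, hS fun k => if 3 ≤ k then d (u k) (u (k + 1)) else 0, add_comm n 3,
      sum_range_add]
    simp [sum_range_succ, add_comm]

theorem good_self (S : Setup w μ d α) (a : V) : Good w d α a a 0 := by
  refine ⟨S.d_nonneg _ _, fun _ => ?_⟩
  rw [S.d_self]; exact .nil _

theorem good_nbr (S : Setup w μ d α) {a b : V} (h : Nbr w a b) : Good w d α a b (α a b) := by
  rcases h with rfl | h
  · rw [S.self]; exact S.good_self _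
  · refine ⟨S.le _ _ h, fun heq => ?_⟩
    simpa using MaxPath.cons ⟨h, heq⟩ (.nil b)

/-- If the path `a, b, c` is not a geodesic, a geodesic from `c` to `a` closes it up to a cycle of
`X₂`: the fourth vertex of that cycle is the second one of the geodesic. -/
theorem good_two (S : Setup w μ d α) {a b c : V} (hab : Nbr w a b) (hbc : Nbr w b c) :
    Good w d α a c (α a b + α b c) := by
  rcases hab with rfl | hab
  · rw [S.self, zero_add]; exact S.good_nbr hbc
  rcases hbc with rfl | hbc
  · rw [S.self, add_zero]; exact S.good_nbr (.inr hab)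
  by_cases hac : a = c
  · subst hac
    rw [S.anti a b, neg_add_cancel]; exact S.good_self _
  by_cases hd : d a b + d b c = d a c
  · exact Good.trans (S.good_nbr (.inr hab)) (S.good_nbr (.inr hbc)) hd
  have hlt : d a c < d a b + d b c := lt_of_le_of_ne (S.tri _ _ _) (Ne.symm hd)
  obtain ⟨m, v, g⟩ := S.exists_geo a c
  have hvb : ∀ j ≤ m, v j ≠ b := by
    intro j hj h
    have := Geo.mid S g hj
    rw [h] at this; exact hd this.symm
  have hgood := Geo.good S g
  obtain ⟨h0, hm, hv⟩ := g
  cases m with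
  | zero => exact absurd (hm.symm.trans h0) hac
  | succ n =>
    let u : ℕ → V := fun k => match k with
      | 0 => a
      | 1 => b
      | k + 2 => v k
    have key := S.cycle_sum n u hm ?_ ?_ ?_
    · have : ∑ k ∈ range (n + 3), α (u k) (u (k + 1))
          = α a b + α b c + ∑ k ∈ range (n + 1), α (v k) (v (k + 1)) := by
        rw [sum_range_succ', sum_range_succ']
        simp only [u, h0]; ring
      rw [this] at key
      rwa [show α a b + α b c = -∑ k ∈ range (n + 1), α (v k) (v (k + 1)) by linarith]
    · have hva : ∀ j < n + 1, v j ≠ a := fun j hj h =>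
        absurd (Geo.inj S ⟨h0, hm, hv⟩ (by omega) le_rfl (h.trans hm.symm)) (by omega)
      intro i hi j hj hij
      rcases i with _ | _ | i <;> rcases j with _ | _ | j <;> simp only [u] at hij
      · rfl
      · exact absurd hij (S.adj_ne hab)
      · exact absurd hij.symm (hva j (by omega))
      · exact absurd hij.symm (S.adj_ne hab)
      · rfl
      · exact absurd hij.symm (hvb j (by omega))
      · exact absurd hij (hva i (by omega))
      · exact absurd hij (hvb i (by omega))
      · rw [Geo.inj S ⟨h0, hm, hv⟩ (by omega) (by omega) hij]
    · intro k hk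
      rcases k with _ | _ | k
      · exact hab
      · simpa [u, h0] using hbc
      · exact (hv k (by omega)).1
    · refine .inr ?_
      simp only [u, h0]
      have h1 := (hv 0 (by omega)).2
      have h2 := Geo.sum S ⟨h0, hm, hv⟩ le_rfl
      rw [hm, S.d_self, sum_range_succ'] at h2
      rw [zero_add, h0] at h1 h2
      refine ⟨?_, ?_⟩
      · rw [S.d_symm a (v 1)]; linarith [S.d_symm a c, S.d_nonneg c (v 1)]
      · linarith

/-- If the path `a, b, c, e` is not a geodesic, a geodesic from `e` to `a` closes it up to a cycle
of `X₂`, unless it runs through `b` or `c`; then one of the edges is split off. -/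
theorem good_three (S : Setup w μ d α) {a b c e : V} (hab : Nbr w a b) (hbc : Adj w b c)
    (hce : Nbr w c e) : Good w d α a e (α a b + α b c + α c e) := by
  rcases hab with rfl | hab
  · rw [S.self, zero_add]; exact S.good_two (.inr hbc) hce
  rcases hce with rfl | hce
  · rw [S.self, add_zero]; exact S.good_two (.inr hab) (.inr hbc)
  by_cases hac : a = c
  · subst hac
    rw [S.anti a b, neg_add_cancel, zero_add]; exact S.good_nbr (.inr hce)
  by_cases hbe : b = e
  · subst hbe
    rw [S.anti c b, add_neg_cancel_right]; exact S.good_nbr (.inr hab)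
  by_cases hae : a = e
  · subst hae
    let u : ℕ → V := fun k => match k with
      | 0 => a
      | 1 => b
      | 2 => c
      | _ => a
    have key := S.cycle_sum 0 u rfl ?_ ?_ (.inl rfl)
    · simp only [zero_add, sum_range_succ, range_zero, sum_empty, u] at key
      rw [key]; exact S.good_self _
    · have h1 := S.adj_ne hab
      have h2 := S.adj_ne hbc
      intro i hi j hj hij
      interval_cases i <;> interval_cases j <;> simp_all [u, eq_comm]
    · intro k hk
      interval_cases k
      · exact hab
      · exact hbc
      · exact hce
  by_cases hd1 : d a b + d b e = d a e
  · rw [add_assoc]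
    exact Good.trans (S.good_nbr (.inr hab)) (S.good_two (.inr hbc) (.inr hce)) hd1
  by_cases hd2 : d a c + d c e = d a e
  · exact Good.trans (S.good_two (.inr hab) (.inr hbc)) (S.good_nbr (.inr hce)) hd2
  have hlt : d a e < d a b + d b c + d c e := by
    have := lt_of_le_of_ne (S.tri a b e) (Ne.symm hd1)
    linarith [S.tri b c e]
  obtain ⟨n, v, g⟩ := S.exists_geo a e
  have hvb : ∀ j ≤ n, v j ≠ b := by
    intro j hj h
    have := Geo.mid S g hj
    rw [h] at this; exact hd1 this.symm
  have hvc : ∀ j ≤ n, v j ≠ c := by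
    intro j hj h
    have := Geo.mid S g hj
    rw [h] at this; exact hd2 this.symm
  have hva : ∀ j < n, v j ≠ a := fun j hj h =>
    absurd (Geo.inj S g (by omega) le_rfl (h.trans g.2.1.symm)) (by omega)
  have hgood := Geo.good S g
  let u : ℕ → V := fun k => match k with
    | 0 => a
    | 1 => b
    | 2 => c
    | k + 3 => v k
  have key := S.cycle_sum n u g.2.1 ?_ ?_ ?_
  · have : ∑ k ∈ range (n + 3), α (u k) (u (k + 1))
        = α a b + α b c + α c e + ∑ k ∈ range n, α (v k) (v (k + 1)) := by
      rw [sum_range_succ', sum_range_succ', sum_range_succ']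
      simp only [u, g.1]; ring
    rw [this] at key
    rwa [show α a b + α b c + α c e = -∑ k ∈ range n, α (v k) (v (k + 1)) by linarith]
  · intro i hi j hj hij
    have h1 := S.adj_ne hab
    have h2 := S.adj_ne hbc
    rcases i with _ | _ | _ | i <;> rcases j with _ | _ | _ | j <;> simp only [u] at hij
    · rfl
    · exact absurd hij h1
    · exact absurd hij hac
    · exact absurd hij.symm (hva j (by omega))
    · exact absurd hij.symm h1
    · rfl
    · exact absurd hij h2
    · exact absurd hij.symm (hvb j (by omega))
    · exact absurd hij.symm hac
    · exact absurd hij.symm h2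
    · rfl
    · exact absurd hij.symm (hvc j (by omega))
    · exact absurd hij (hva i (by omega))
    · exact absurd hij (hvb i (by omega))
    · exact absurd hij (hvc i (by omega))
    · rw [Geo.inj S g (by omega) (by omega) hij]
  · intro k hk
    rcases k with _ | _ | _ | k
    · exact hab
    · exact hbc
    · simpa [u, g.1] using hce
    · exact (g.2.2 k (by omega)).1
  · refine .inr ?_
    simp only [u, g.1]
    have h2 := Geo.sum S g le_rfl
    rw [g.2.1, S.d_self, add_zero] at h2
    exact ⟨hlt, h2.symm⟩

/-! ### Comparing Laplacians along a maximal edge -/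

theorem gradSet_finite (w d : V → V → ℝ) (f : V → ℝ) :
    { r : ℝ | ∃ x y, Adj w x y ∧ r = |grad d f x y| }.Finite := by
  refine (Set.finite_range fun p : V × V => |grad d f p.1 p.2|).subset ?_
  rintro r ⟨x, y, -, rfl⟩
  exact ⟨(x, y), rfl⟩

/-- Non-negative curvature, freed from the infimum: the Laplacian of a `1`-Lipschitz function does
not increase along an edge of maximal ascent. -/
theorem lap_le (S : Setup w μ d α) {x y : V} (h : Adj w x y) {f : V → ℝ}
    (hf : ∀ a b, f a - f b ≤ d a b) (hxy : f y - f x = d x y) : lap w μ f y ≤ lap w μ f x := by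
  have hdpos := S.d_pos (S.adj_ne h)
  have hk := S.hcurv x y h
  have hbdd : BddBelow { r : ℝ | ∃ f : V → ℝ, grad d f y x = 1 ∧ gradNorm w d f = 1 ∧
      r = grad d (lap w μ f) x y } := by
    refine ⟨(-(∑ z, w x z / μ x * d x z) - ∑ z, w y z / μ y * d y z) / d x y, ?_⟩
    rintro r ⟨f, -, hn, rfl⟩
    have hlip : ∀ a b, Adj w a b → |f a - f b| ≤ d a b := by
      intro a b hab
      have h1 : |grad d f a b| ≤ 1 := by
        rw [← hn]
        exact le_csSup (gradSet_finite w d f).bddAbove ⟨a, b, hab, rfl⟩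
      rwa [grad, abs_div, abs_of_pos (S.d_pos (S.adj_ne hab)),
        div_le_one (S.d_pos (S.adj_ne hab))] at h1
    have hterm : ∀ a b, |w a b / μ a * (f b - f a)| ≤ w a b / μ a * d a b := by
      intro a b
      rw [abs_mul, abs_of_nonneg (div_nonneg (S.hG.nonneg a b) (S.hG.mu_pos a).le)]
      by_cases hab : Adj w a b
      · rw [abs_sub_comm]
        exact mul_le_mul_of_nonneg_left (hlip a b hab)
          (div_nonneg (S.hG.nonneg a b) (S.hG.mu_pos a).le)
      · have : w a b = 0 := le_antisymm (not_lt.1 hab) (S.hG.nonneg a b)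
        simp [this]
    have hlap : ∀ a, |lap w μ f a| ≤ ∑ z, w a z / μ a * d a z := fun a =>
      (abs_sum_le_sum_abs _ _).trans (sum_le_sum fun b _ => hterm a b)
    unfold grad
    have h1 := (abs_le.1 (hlap x)).1
    have h2 := (abs_le.1 (hlap y)).2
    gcongr
  have hmem : grad d (lap w μ f) x y ∈ { r : ℝ | ∃ f : V → ℝ, grad d f y x = 1 ∧
      gradNorm w d f = 1 ∧ r = grad d (lap w μ f) x y } := by
    have hg : grad d f y x = 1 := by
      rw [grad, hxy, S.d_symm y x, div_self hdpos.ne']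
    refine ⟨f, hg, ?_, rfl⟩
    refine le_antisymm (csSup_le ⟨_, x, y, h, rfl⟩ ?_) ?_
    · rintro r ⟨a, b, hab, rfl⟩
      have hab' := S.d_pos (S.adj_ne hab)
      rw [grad, abs_div, abs_of_pos hab', div_le_one hab', abs_le]
      exact ⟨by linarith [hf b a, S.d_symm a b], hf a b⟩
    · refine le_csSup (gradSet_finite w d f).bddAbove ⟨y, x, S.adj_symm h, ?_⟩
      rw [hg, abs_one]
  have h1 : 0 ≤ grad d (lap w μ f) x y := hk.trans (csInf_le hbdd hmem)
  unfold grad at h1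
  have := (div_nonneg_iff.1 h1).resolve_right (fun h => absurd h.2 (not_le.2 hdpos))
  linarith [this.1]

theorem eventually_slack {s t : ℝ} (hs : 0 ≤ s) (h : s = 0 → 0 ≤ t) :
    ∀ᶠ ε : ℝ in nhdsWithin 0 (Set.Ioi 0), 0 ≤ s + ε * t := by
  rcases hs.eq_or_lt with h0 | hpos
  · filter_upwards [self_mem_nhdsWithin] with ε hε
    have := mul_nonneg (le_of_lt hε) (h h0.symm)
    linarith
  · have hc : Filter.Tendsto (fun ε : ℝ => s + ε * t) (nhds 0) (nhds s) := by
      have : Continuous fun ε : ℝ => s + ε * t := by fun_prop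
      simpa using this.tendsto 0
    filter_upwards [(hc.eventually (lt_mem_nhds hpos)).filter_mono nhdsWithin_le_nhds] with ε hε
    exact hε.le

/-- First-order perturbation of the potential of `α` around a maximal edge `x, y`. On the closed
neighbourhoods of `x` and `y` the form `α` has a primitive that is an optimal test function for the
curvature; it is perturbed by `ε q` near `y` and extended with the smallest possible `1`-Lipschitz
extension, which is at most the primitive plus `ε p` near `x`. -/
theorem perturb (S : Setup w μ d α) {x y : V} (hxy : MaxEdge w d α x y) (p q : V → ℝ)
    (hpq : p x = q y)
    (h1 : ∀ x' y', Nbr w x x' → Nbr w y y' → α x' x + α x y + α y y' = d x' y' → q y' ≤ p x')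
    (h2 : ∀ y', Nbr w y y' → α y y' = d y y' → q y' ≤ q y) :
    lap w μ q y ≤ lap w μ p x := by
  classical
  have e1 : ∀ᶠ ε : ℝ in nhdsWithin 0 (Set.Ioi 0), ∀ x' y', Nbr w x x' → Nbr w y y' →
      0 ≤ d x' y' - (α x' x + α x y + α y y') + ε * (p x' - q y') := by
    simp only [Filter.eventually_all]
    intro x' y' hx' hy'
    refine eventually_slack ?_ fun h => ?_
    · linarith [(S.good_three (S.nbr_symm hx') hxy.1 hy').1]
    · linarith [h1 x' y' hx' hy' (by linarith)]
  have e2 : ∀ᶠ ε : ℝ in nhdsWithin 0 (Set.Ioi 0), ∀ y', Nbr w y y' →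
      0 ≤ d y y' - α y y' + ε * (q y - q y') := by
    simp only [Filter.eventually_all]
    intro y' hy'
    refine eventually_slack ?_ fun h => ?_
    · linarith [(S.good_nbr hy').1]
    · linarith [h2 y' hy' (by linarith)]
  obtain ⟨ε, ⟨e1, e2⟩, hε⟩ := ((e1.and e2).and self_mem_nhdsWithin).exists
  have hε : 0 < ε := hε
  have hne : (univ.filter fun z => Nbr w y z).Nonempty := ⟨y, mem_filter.2 ⟨mem_univ _, .inl rfl⟩⟩
  let g : V → ℝ := fun v => (univ.filter fun z => Nbr w y z).sup' hne
    fun z => α y z + ε * q z - d v z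
  have hge : ∀ v z, Nbr w y z → α y z + ε * q z - d v z ≤ g v := fun v z hz =>
    le_sup' (fun z => α y z + ε * q z - d v z) (by simpa using hz)
  have hle : ∀ v c, (∀ z, Nbr w y z → α y z + ε * q z - d v z ≤ c) → g v ≤ c := fun v c h =>
    sup'_le hne _ fun z hz => h z (by simpa using hz)
  have hlip : ∀ a b, g a - g b ≤ d a b := by
    intro a b
    suffices g a ≤ g b + d a b by linarith
    refine hle _ _ fun z hz => ?_
    linarith [hge b z hz, S.tri b a z, S.d_symm a b]
  have hy : g y = ε * q y := by
    refine le_antisymm (hle _ _ fun z hz => ?_) ?_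
    · linarith [e2 z hz]
    · have := hge y y (.inl rfl)
      rw [S.self, S.d_self] at this; linarith
  have hx' : ∀ x', Nbr w x x' → g x' ≤ -d x y + α x x' + ε * p x' := by
    intro x' hx'
    refine hle _ _ fun z hz => ?_
    linarith [e1 x' z hx' hz, S.anti x x', hxy.2]
  have hx : g x = -d x y + ε * p x := by
    refine le_antisymm ?_ ?_
    · have := hx' x (.inl rfl)
      rw [S.self] at this; linarith
    · have := hge x y (.inl rfl)
      rw [S.self] at this
      rw [hpq]; linarith
  have hlap := S.lap_le hxy.1 hlip (by rw [hy, hx, hpq]; ring)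
  have hcoef : ∀ a b, 0 ≤ w a b / μ a := fun a b =>
    div_nonneg (S.hG.nonneg a b) (S.hG.mu_pos a).le
  have hzero : ∀ a b, ¬ Adj w a b → w a b / μ a = 0 := fun a b h => by
    rw [le_antisymm (not_lt.1 h) (S.hG.nonneg a b), zero_div]
  have hsplit : ∀ (r : V → ℝ) (a : V), ∑ b, w a b / μ a * (α a b + ε * (r b - r a))
      = ε * lap w μ r a := by
    intro r a
    have := S.hα.2.2.2 a
    unfold lap
    simp only [mul_add, sum_add_distrib]
    rw [this, mul_sum, zero_add]
    exact sum_congr rfl fun b _ => by ring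
  have hL : ε * lap w μ q y ≤ lap w μ g y := by
    rw [← hsplit]
    refine sum_le_sum fun b _ => ?_
    by_cases hb : Adj w y b
    · refine mul_le_mul_of_nonneg_left ?_ (hcoef _ _)
      have := hge b b (.inr hb)
      rw [S.d_self] at this
      rw [hy]; linarith
    · simp [hzero _ _ hb]
  have hR : lap w μ g x ≤ ε * lap w μ p x := by
    rw [← hsplit]
    refine sum_le_sum fun b _ => ?_
    by_cases hb : Adj w x b
    · refine mul_le_mul_of_nonneg_left ?_ (hcoef _ _)
      have := hx' b (.inr hb)
      rw [hx]; linarith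
    · simp [hzero _ _ hb]
  exact le_of_mul_le_mul_left (hL.trans (hlap.trans hR)) hε

/-- Every neighbour of `x` is matched with a point of the closed neighbourhood of `y` in an optimal
transport from `x` to `y`. -/
theorem exists_match (S : Setup w μ d α) {x y x' : V} (hxy : MaxEdge w d α x y)
    (hx' : Adj w x x') : ∃ y', Nbr w y y' ∧ MaxPath w d α x' y' (d x' y') ∧
      α x' x + α x y + α y y' = d x' y' := by
  classical
  suffices ∃ y', Nbr w y y' ∧ α x' x + α x y + α y y' = d x' y' by
    obtain ⟨y', hy', h⟩ := this
    exact ⟨y', hy', (S.good_three (.inr (S.adj_symm hx')) hxy.1 hy').2 h, h⟩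
  by_contra! hcon
  have hne := S.adj_ne hx'
  have h := S.perturb hxy (fun z => if z = x' then -1 else 0) (fun _ => 0) (by simp [hne])
    (fun z y' _ hy' ht => by
      by_cases hz : z = x'
      · subst hz; exact absurd ht (hcon y' hy')
      · simp [hz]) (fun _ _ _ => le_rfl)
  simp only [lap, sub_self, mul_zero, sum_const_zero, hne, if_false, sub_zero] at h
  simp only [mul_ite, mul_zero, sum_ite_eq', mem_univ, if_true] at h
  have : 0 < w x x' / μ x := div_pos hx' (S.hG.mu_pos x)
  linarith

/-! ### Propagation of maximal edges through the graph -/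

theorem exists_maxEdge_of_not_bdd {x : V} (hx : ¬ BddAbove (lens w d α x)) :
    ∃ y, MaxEdge w d α x y ∧ ¬ BddAbove (lens w d α y) := by
  by_contra! hcon
  refine hx ?_
  have : lens w d α x ⊆
      {0} ∪ ⋃ y ∈ { y | MaxEdge w d α x y }, (fun t => d x y + t) '' lens w d α y := by
    intro s hs
    rcases mem_lens hs with rfl | ⟨y, t, hy, ht, rfl⟩
    · exact .inl rfl
    · exact .inr (Set.mem_biUnion hy ⟨t, ht, rfl⟩)
  refine BddAbove.mono this (bddAbove_singleton.union ?_)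
  refine ((Set.toFinite _).bddAbove_biUnion).2 fun y hy => ?_
  exact (add_right_mono).map_bddAbove (hcon y hy)

theorem maxLen_eq {x : V} (hx : BddAbove (lens w d α x)) :
    maxLen w d α x = 0 ∨ ∃ y, MaxEdge w d α x y ∧ maxLen w d α x = d x y + maxLen w d α y := by
  classical
  have hmp : ∀ y, MaxEdge w d α x y → MaxPath w d α x y (d x y) := fun y hy => by
    simpa using MaxPath.cons hy (.nil y)
  let F : Finset ℝ := insert 0 ((univ.filter fun y => MaxEdge w d α x y).image
    fun y => d x y + maxLen w d α y)
  obtain ⟨B, hB, hmax⟩ := exists_max_image F id ⟨0, mem_insert_self _ _⟩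
  have hle : maxLen w d α x ≤ B := by
    refine csSup_le ⟨0, zero_mem_lens x⟩ fun s hs => ?_
    rcases mem_lens hs with rfl | ⟨y, t, hy, ht, rfl⟩
    · exact hmax 0 (mem_insert_self _ _)
    · have h1 := le_csSup (bdd_of_maxPath (hmp y hy) hx) ht
      have h2 := hmax (d x y + maxLen w d α y)
        (mem_insert_of_mem (mem_image_of_mem _ (by simpa using hy)))
      unfold maxLen at h2
      simp only [id] at h2
      linarith
  rcases mem_insert.1 hB with rfl | hB
  · exact .inl (le_antisymm hle (le_csSup hx (zero_mem_lens x)))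
  · obtain ⟨y, hy, rfl⟩ := mem_image.1 hB
    have hy : MaxEdge w d α x y := by simpa using hy
    exact .inr ⟨y, hy, le_antisymm hle (add_maxLen_le (hmp y hy) hx)⟩

theorem connected_induction (S : Setup w μ d α) {P : V → Prop} {x : V} (hx : P x)
    (hP : ∀ a b, P a → Adj w a b → P b) (y : V) : P y := by
  obtain ⟨n, c, h0, hl, hc⟩ := S.hconn x y
  rw [← hl]
  have : ∀ i, P (c i) := by
    intro i
    induction i using Fin.induction with
    | zero => rwa [h0]
    | succ i ih => exact hP _ _ ih (hc i)
  exact this _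

/-- If all paths of maximal edges had bounded length, the longest length starting in a vertex would
be a subharmonic function, hence constant. -/
theorem exists_not_bdd (S : Setup w μ d α) {x₀ y₀ : V} (h₀ : MaxEdge w d α x₀ y₀) :
    ∃ x, ¬ BddAbove (lens w d α x) := by
  classical
  by_contra! hb
  set N := maxLen w d α with hN
  have hnonneg : ∀ x, 0 ≤ N x := fun x => le_csSup (hb x) (zero_mem_lens x)
  have hcoef : ∀ a b, 0 ≤ w a b / μ a := fun a b =>
    div_nonneg (S.hG.nonneg a b) (S.hG.mu_pos a).le
  have hedge : ∀ x y, MaxEdge w d α x y → d x y + N y ≤ N x := fun x y hxy =>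
    add_maxLen_le (by simpa using MaxPath.cons hxy (.nil y)) (hb x)
  have hstep : ∀ x y, MaxEdge w d α x y → N x = d x y + N y → lap w μ N y ≤ lap w μ N x := by
    intro x y hxy hNxy
    have h := S.perturb hxy (fun z => N z + α x z - d x y) (fun z => N z + α y z)
      (by simp only [S.self]; linarith) ?_ ?_
    · have hadd : ∀ (a : V) (c : ℝ), lap w μ (fun z => N z + α a z - c) a = lap w μ N a := by
        intro a c
        have := S.hα.2.2.2 a
        unfold lap
        rw [← add_zero (∑ b, w a b / μ a * (N b - N a)), ← this, ← sum_add_distrib]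
        refine sum_congr rfl fun b _ => ?_
        simp only [S.self]; ring
      have h3 := hadd y 0
      simp only [sub_zero] at h3
      rwa [hadd, h3] at h
    · intro x' y' hx' hy' ht
      have hp := (S.good_three (S.nbr_symm hx') hxy.1 hy').2 ht
      have := add_maxLen_le hp (hb x')
      rw [← hN] at this
      linarith [S.anti x x', hxy.2]
    · rintro y' (rfl | hy') ht
      · exact le_rfl
      · have := hedge y y' ⟨hy', ht⟩
        simp only [S.self]; linarith
  have hsub : ∀ x, 0 ≤ lap w μ N x := by
    by_contra! hcon
    obtain ⟨x, hx⟩ := hcon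
    obtain ⟨x, hx, hmin⟩ := exists_min_image (univ.filter fun x => lap w μ N x < 0) N
      ⟨x, by simpa using hx⟩
    simp only [mem_filter, mem_univ, true_and] at hx hmin
    rcases maxLen_eq (hb x) with h | ⟨y, hxy, h⟩
    · refine absurd hx (not_lt.2 (sum_nonneg fun b _ => mul_nonneg (hcoef _ _) ?_))
      rw [← hN] at h
      rw [h, sub_zero]; exact hnonneg b
    · have h1 := hmin y ((hstep x y hxy h).trans_lt hx)
      have := S.d_pos (S.adj_ne hxy.1)
      rw [← hN] at h
      linarith
  obtain ⟨x, -, hmax⟩ := exists_max_image univ N ⟨x₀, mem_univ _⟩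
  have hconst : ∀ y, N y = N x := by
    refine S.connected_induction rfl fun a b ha hab => ?_
    have hterm : ∀ c ∈ univ, w a c / μ a * (N c - N a) ≤ 0 := fun c _ =>
      mul_nonpos_of_nonneg_of_nonpos (hcoef _ _) (by linarith [hmax c (mem_univ _)])
    have h0 : lap w μ N a = 0 := le_antisymm (sum_nonpos hterm) (hsub a)
    have := (sum_eq_zero_iff_of_nonpos hterm).1 h0 b (mem_univ _)
    have hpos : w a b / μ a ≠ 0 := (div_pos hab (S.hG.mu_pos a)).ne'
    linarith [(mul_eq_zero.1 this).resolve_left hpos]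
  have h1 := hedge _ _ h₀
  have h2 := S.d_pos (S.adj_ne h₀.1)
  rw [hconst x₀, hconst y₀] at h1
  linarith

/-- Unbounded lengths propagate to neighbours: among the pairs of neighbours violating this, one
minimises `maxLen x' + α x x'`, and moving along a maximal edge lowers this quantity. -/
theorem not_bdd_of_adj (S : Setup w μ d α) {x x' : V} (hx : ¬ BddAbove (lens w d α x))
    (hadj : Adj w x x') : ¬ BddAbove (lens w d α x') := by
  classical
  intro hx'
  obtain ⟨⟨x, x'⟩, hmem, hmin⟩ := exists_min_image
    (univ.filter fun p : V × V => ¬ BddAbove (lens w d α p.1) ∧ BddAbove (lens w d α p.2) ∧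
      Nbr w p.1 p.2) (fun p => maxLen w d α p.2 + α p.1 p.2)
    ⟨(x, x'), by simpa using ⟨hx, hx', .inr hadj⟩⟩
  simp only [mem_filter, mem_univ, true_and] at hmem hmin
  obtain ⟨hx, hx', rfl | hadj⟩ := hmem
  · exact hx hx'
  obtain ⟨y, hxy, hy⟩ := exists_maxEdge_of_not_bdd hx
  obtain ⟨y', hy', hp, ht⟩ := S.exists_match hxy hadj
  have h1 := hmin (y, y') ⟨hy, bdd_of_maxPath hp hx', hy'⟩
  have h2 := add_maxLen_le hp hx'
  have h3 := S.d_pos (S.adj_ne hxy.1)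
  simp only at h1
  linarith [hxy.2, S.anti x x']

theorem exists_maxEdge (S : Setup w μ d α) {x₀ y₀ : V} (h₀ : MaxEdge w d α x₀ y₀) (x : V) :
    ∃ y, MaxEdge w d α x y := by
  obtain ⟨z, hz⟩ := S.exists_not_bdd h₀
  have := S.connected_induction (P := fun v => ¬ BddAbove (lens w d α v)) hz
    (fun a b ha hab => S.not_bdd_of_adj ha hab) x
  obtain ⟨y, hy, -⟩ := exists_maxEdge_of_not_bdd this
  exact ⟨y, hy⟩

theorem neg (S : Setup w μ d α) : Setup w μ d (fun x y => -α x y) := by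
  refine ⟨S.hG, S.hconn, S.hd, S.hcurv, ⟨fun x y => ?_, fun x y h => ?_, fun n c hc hX => ?_,
    fun x => ?_⟩, fun x y h => ?_⟩
  · exact congrArg Neg.neg (S.anti x y)
  · simp only [S.hα.2.1 x y h, neg_zero]
  · rw [sum_neg_distrib, S.hα.2.2.1 n c hc hX, neg_zero]
  · simp only [mul_neg, sum_neg_distrib, S.hα.2.2.2 x, neg_zero]
  · rw [← S.anti, S.d_symm]; exact S.le _ _ (S.adj_symm h)

end Setup

end Paper

open Paper in
/-- **Lemma (harmonic 1-forms attain their supremum norm twice at every vertex).**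
Let `G = (V, w, μ)` be a finite connected weighted graph with a general path distance `d` and
non-negative Ollivier curvature. Let `α ∈ H₁(M₂(G))` with `‖α‖_∞ = 1`, where
`‖α‖_∞ = sup_{x ∼ y} α(x,y)/d(x,y)`. Then for every vertex `x` there are neighbours `y, z`
of `x` with `α(x,y)/d(x,y) = α(z,x)/d(z,x) = 1`. -/
theorem harmonic_one_form_attains_sup_twice
    {V : Type*} [Fintype V] [Nonempty V] (w : V → V → ℝ) (μ : V → ℝ) (d : V → V → ℝ)
    (hG : IsWeightedGraph w μ) (hconn : GraphConnected w) (hd : IsPathDistance w d)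
    (hcurv : NonnegCurv w μ d)
    (α : V → V → ℝ) (hα : α ∈ H1set w μ d)
    (hnorm : sSup { r : ℝ | ∃ x y : V, Adj w x y ∧ r = α x y / d x y } = 1) :
    ∀ x : V, ∃ y z : V, Adj w x y ∧ Adj w x z ∧
      α x y / d x y = 1 ∧ α z x / d z x = 1 := by
  have hsymm : ∀ {x y}, Adj w x y → Adj w y x := fun {x y} h => by
    unfold Adj at *; rwa [hG.symm]
  have hdpos : ∀ {x y}, Adj w x y → 0 < d x y := fun {x y} h => by
    refine lt_of_le_of_ne (hd.2.2.1 x y) fun h' => ?_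
    obtain rfl := (hd.2.1 x y).1 h'.symm
    unfold Adj at h; rw [hG.loopless] at h; exact lt_irrefl _ h
  have hfin : { r : ℝ | ∃ x y : V, Adj w x y ∧ r = α x y / d x y }.Finite := by
    refine (Set.finite_range fun p : V × V => α p.1 p.2 / d p.1 p.2).subset ?_
    rintro r ⟨x, y, -, rfl⟩
    exact ⟨(x, y), rfl⟩
  -- The supremum of the empty set of reals is `0`, so there is at least one edge.
  have hne : { r : ℝ | ∃ x y : V, Adj w x y ∧ r = α x y / d x y }.Nonempty := by
    rw [Set.nonempty_iff_ne_empty]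
    intro h
    rw [h, Real.sSup_empty] at hnorm
    exact zero_ne_one hnorm
  obtain ⟨x₀, y₀, h₀, heq⟩ := hne.csSup_mem hfin
  rw [hnorm, eq_div_iff (hdpos h₀).ne', one_mul] at heq
  have S : Setup w μ d α := ⟨hG, hconn, hd, hcurv, hα, fun x y h => by
    rw [← div_le_one (hdpos h), ← hnorm]
    exact le_csSup hfin.bddAbove ⟨x, y, h, rfl⟩⟩
  intro x
  obtain ⟨y, hy, hy'⟩ := S.exists_maxEdge ⟨h₀, heq.symm⟩ x
  obtain ⟨z, hz, hz'⟩ := S.neg.exists_maxEdge (x₀ := y₀) (y₀ := x₀)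
    ⟨hsymm h₀, by
      change -α y₀ x₀ = d y₀ x₀
      rw [← S.anti, ← heq, S.d_symm]⟩ x
  refine ⟨y, z, hy, hz, ?_, ?_⟩
  · rw [hy', div_self (hdpos hy).ne']
  · have hz' : -α x z = d x z := hz'
    rw [S.anti z x, hz', S.d_symm x z, div_self (hdpos (hsymm hz)).ne']
end

section
/- Let k,n∈ℕ with k≥1 and let E⊆ℝⁿ be a linear subspace such that for every v∈E there exist k distinct indices i₁<…<i_k with |v_{i_j}| = ‖v‖_∞ for j=1,…,k (where ‖v‖_∞ is the supremum norm). Then dim(E) ≤ n/k. -/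
/-!
Group two coordinates together when they have the same absolute value on all of `E`. Call a
coordinate heavy if its group has at least `k` members; there are at most `n / k` heavy groups, so
it suffices that a vector `v ∈ E` vanishing on all heavy coordinates is zero
(`eq_zero_of_vanishes_on_heavy`). If `v ≠ 0`, then every `w ∈ E` close to `v` has
`|w j| < ‖w‖` for all heavy `j`. But the generic `w` (`dense_separating`) has different
absolute values on different groups, so the `k` coordinates at which it attains its norm all lie in
one group, which is therefore heavy: a contradiction.
-/

lemma dense_ne_zero {n : ℕ} {E : Submodule ℝ (Fin n → ℝ)} (φ : E →ₗ[ℝ] ℝ) (hφ : φ ≠ 0) :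
    Dense {w : E | φ w ≠ 0} := by
  have h : interior ((LinearMap.ker φ : Submodule ℝ E) : Set E) = ∅ := by
    by_contra hne
    exact hφ (LinearMap.ker_eq_top.1
      (Submodule.eq_top_of_nonempty_interior' _ (Set.nonempty_iff_ne_empty.2 hne)))
  exact interior_eq_empty_iff_dense_compl.1 h

/-- Generic vectors of `E` have distinct absolute values at any two coordinates whose absolute
values do not agree on all of `E`. -/
lemma dense_separating {n : ℕ} (E : Submodule ℝ (Fin n → ℝ)) :
    Dense {w : E | ∀ i j, |w.1 i| = |w.1 j| → ∀ u : E, |u.1 i| = |u.1 j|} := by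
  have : CompleteSpace E := FiniteDimensional.complete ℝ E
  let ev : Fin n → (E →ₗ[ℝ] ℝ) := fun i => LinearMap.proj i ∘ₗ E.subtype
  have hd : ∀ φ : E →ₗ[ℝ] ℝ, IsOpen {w : E | φ ≠ 0 → φ w ≠ 0} ∧
      Dense {w : E | φ ≠ 0 → φ w ≠ 0} := by
    intro φ
    by_cases hφ : φ = 0
    · simp [hφ]
    · simp only [ne_eq, hφ, not_false_eq_true, true_imp_iff]
      exact ⟨isOpen_ne_fun φ.continuous_of_finiteDimensional continuous_const,
        dense_ne_zero φ hφ⟩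
  -- `|w i| = |w j|` says that one of the functionals `w i - w j`, `w i + w j` vanishes at `w`.
  have hD := dense_iInter_of_isOpen
    (f := fun p : Fin n × Fin n => {w : E | ev p.1 - ev p.2 ≠ 0 → (ev p.1 - ev p.2) w ≠ 0} ∩
      {w : E | ev p.1 + ev p.2 ≠ 0 → (ev p.1 + ev p.2) w ≠ 0})
    (fun p => (hd _).1.inter (hd _).1)
    (fun p => (hd _).2.inter_of_isOpen_left (hd _).2 (hd _).1)
  refine hD.mono fun w hw i j hij u => ?_
  obtain ⟨h1, h2⟩ := Set.mem_iInter.1 hw (i, j)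
  rcases abs_eq_abs.1 hij with h | h
  · have h0 : ev i - ev j = 0 := by
      by_contra hne
      exact h1 hne (sub_eq_zero.2 h)
    have hu : u.1 i - u.1 j = 0 := LinearMap.congr_fun h0 u
    rw [sub_eq_zero.1 hu]
  · have h0 : ev i + ev j = 0 := by
      by_contra hne
      exact h2 hne (by change w.1 i + w.1 j = 0; rw [h]; ring)
    have hu : u.1 i + u.1 j = 0 := LinearMap.congr_fun h0 u
    rw [eq_neg_of_add_eq_zero_left hu, abs_neg]

/-- The absolute value of the `i`-th coordinate, as a function on `E`. The groups of coordinates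
are the fibres of this map. -/
def absCoord {n : ℕ} (E : Submodule ℝ (Fin n → ℝ)) (i : Fin n) : E → ℝ := fun u => |u.1 i|

open Classical in
lemma eq_zero_of_vanishes_on_heavy {k n : ℕ} (hk : 1 ≤ k) (E : Submodule ℝ (Fin n → ℝ))
    (hE : ∀ v ∈ E, ∃ s : Finset (Fin n), s.card = k ∧ ∀ i ∈ s, |v i| = ‖v‖)
    (v : E) (hv : ∀ j, k ≤ (Finset.univ.filter fun i => absCoord E i = absCoord E j).card →
      v.1 j = 0) : v = 0 := by
  by_contra hne
  let U : Set E := ⋂ j : {j // v.1 j = 0}, {w : E | |w.1 j| < ‖w.1‖}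
  have hU : IsOpen U := isOpen_iInter_of_finite fun j => isOpen_lt
    ((continuous_apply j.1).comp continuous_subtype_val).abs (by fun_prop)
  have hvU : v ∈ U := by
    refine Set.mem_iInter.2 fun j => ?_
    have h0 : 0 < ‖v.1‖ := norm_pos_iff.2 fun h => hne (Subtype.ext h)
    simpa [j.2] using h0
  obtain ⟨w, hwU, hw⟩ := (dense_separating E).inter_open_nonempty U hU ⟨v, hvU⟩
  obtain ⟨s, hs, hsw⟩ := hE w.1 w.2
  obtain ⟨j, hj⟩ : s.Nonempty := Finset.card_pos.1 (by omega)
  have hheavy : k ≤ (Finset.univ.filter fun i => absCoord E i = absCoord E j).card := by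
    rw [← hs]
    refine Finset.card_le_card fun i hi => ?_
    simp only [Finset.mem_filter, Finset.mem_univ, true_and]
    exact funext (hw i j ((hsw i hi).trans (hsw j hj).symm))
  have hlt : |w.1 j| < ‖w.1‖ := Set.mem_iInter.1 hwU ⟨j, hv j hheavy⟩
  exact hlt.ne (hsw j hj)

/-- **Lemma (dimension bound for subspaces whose vectors attain the sup norm `k` times).**
Let `E ⊆ ℝⁿ` be a linear subspace such that every `v ∈ E` attains its supremum norm in at
least `k` distinct coordinates. Then `dim E ≤ n / k`.
Here `Fin n → ℝ` carries the sup norm `‖v‖ = max_i |v i|`. -/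
theorem finrank_le_of_sup_norm_attained_k_times
    (k n : ℕ) (hk : 1 ≤ k) (E : Submodule ℝ (Fin n → ℝ))
    (hE : ∀ v ∈ E, ∃ s : Finset (Fin n), s.card = k ∧ ∀ i ∈ s, |v i| = ‖v‖) :
    (Module.finrank ℝ E : ℝ) ≤ (n : ℝ) / (k : ℝ) := by
  classical
  let fib : (E → ℝ) → Finset (Fin n) := fun q => Finset.univ.filter fun i => absCoord E i = q
  let Q : Finset (E → ℝ) := (Finset.univ.image (absCoord E)).filter fun q => k ≤ (fib q).card
  have hQ : Q.card * k ≤ n := by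
    calc Q.card * k ≤ ∑ q ∈ Q, (fib q).card := by
          rw [← smul_eq_mul]
          exact Finset.card_nsmul_le_sum _ _ _ fun q hq => (Finset.mem_filter.1 hq).2
      _ ≤ ∑ q ∈ Finset.univ.image (absCoord E), (fib q).card :=
          Finset.sum_le_sum_of_subset (Finset.filter_subset _ _)
      _ = n := by
          rw [← Finset.card_eq_sum_card_image, Finset.card_univ, Fintype.card_fin]
  have hrep : ∀ q : Q, ∃ i, absCoord E i = q.1 := fun q => by
    obtain ⟨i, -, hi⟩ := Finset.mem_image.1 (Finset.mem_filter.1 q.2).1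
    exact ⟨i, hi⟩
  choose rep hrep using hrep
  -- Evaluating at one representative of each heavy group is injective on `E`.
  let L : E →ₗ[ℝ] (Q → ℝ) := LinearMap.pi fun q => LinearMap.proj (rep q) ∘ₗ E.subtype
  have hL : Function.Injective L := by
    refine (injective_iff_map_eq_zero L).2 fun v hv => ?_
    refine eq_zero_of_vanishes_on_heavy hk E hE v fun j hj => ?_
    let q : Q := ⟨absCoord E j, Finset.mem_filter.2
      ⟨Finset.mem_image_of_mem _ (Finset.mem_univ j), hj⟩⟩
    have h0 : v.1 (rep q) = 0 := congrFun hv q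
    have h1 : |v.1 (rep q)| = |v.1 j| := congrFun (hrep q) v
    rw [h0, abs_zero] at h1
    exact abs_eq_zero.1 h1.symm
  have hfin : Module.finrank ℝ E ≤ Q.card := by
    simpa using LinearMap.finrank_le_finrank_of_injective hL
  rw [le_div_iff₀ (by exact_mod_cast hk)]
  exact_mod_cast (Nat.mul_le_mul_right k hfin).trans hQ
end

section
/- Let k,n∈ℕ with k≥1, k dividing n, and let E⊆ℝⁿ be a linear subspace with dim(E)=n/k such that for every v∈E there exist k distinct indices i₁<…<i_k with |v_{i_j}|=‖v‖_∞ for j=1,…,k. Then there exist a partition {J₁,…,J_{n/k}} of {1,…,n} with |J_i|=k for each i, and a basis (v¹,…,v^{n/k}) of E such that |v^i_j|=1 if j∈J_i and v^i_j=0 otherwise, for each i=1,…,n/k. -/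
/-!
Call two coordinates equivalent when the coordinate functionals they define on `E` agree up to sign.
By Baire, the vectors of `E` whose inequivalent coordinates have distinct absolute values are dense,
and the coordinates where such a vector attains its norm lie in one class; by hypothesis that class
has at least `k` elements. Approximating a nonzero `u ∈ E` by such vectors shows that some class
with at least `k` elements does not vanish on `u` (`exists_large_class`). Hence evaluation at
representatives of the large classes is injective on `E`, so there are at least `n / k` of them.
Since they are disjoint subsets of `Fin n`, there are exactly `n / k`, each has exactly `k` elements
and they cover `Fin n`. The evaluation map is then an isomorphism, and the preimage of the standard
basis is the basis sought.
-/

/-- Two coordinates are equivalent when their restrictions to `E` agree up to a global sign. -/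
def signSetoid {n : ℕ} (E : Submodule ℝ (Fin n → ℝ)) : Setoid (Fin n) where
  r i j := (∀ v ∈ E, v i = v j) ∨ (∀ v ∈ E, v i = -v j)
  iseqv :=
    { refl := fun _ => Or.inl fun _ _ => rfl
      symm := by
        rintro i j (h | h)
        · exact Or.inl fun v hv => (h v hv).symm
        · exact Or.inr fun v hv => by rw [h v hv, neg_neg]
      trans := by
        rintro i j l (h | h) (h' | h')
        · exact Or.inl fun v hv => by rw [h v hv, h' v hv]
        · exact Or.inr fun v hv => by rw [h v hv, h' v hv]
        · exact Or.inr fun v hv => by rw [h v hv, h' v hv]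
        · exact Or.inl fun v hv => by rw [h v hv, h' v hv, neg_neg] }

lemma abs_eq_of_mk_eq {n : ℕ} {E : Submodule ℝ (Fin n → ℝ)} {i j : Fin n}
    (h : Quotient.mk (signSetoid E) i = Quotient.mk (signSetoid E) j) {v : Fin n → ℝ}
    (hv : v ∈ E) : |v i| = |v j| := by
  rcases (Quotient.exact h : (signSetoid E).r i j) with h | h
  · rw [h v hv]
  · rw [h v hv, abs_neg]

lemma isOpen_dense_ker_compl {V : Type*} [NormedAddCommGroup V] [NormedSpace ℝ V]
    (f : V →L[ℝ] ℝ) (hf : f ≠ 0) : IsOpen {v | f v ≠ 0} ∧ Dense {v | f v ≠ 0} := by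
  refine ⟨isOpen_ne_fun f.continuous continuous_const, ?_⟩
  have h : {v | f v ≠ 0} = (↑(LinearMap.ker f.toLinearMap) : Set V)ᶜ := by
    ext v; simp
  rw [h, ← interior_eq_empty_iff_dense_compl]
  by_contra hne
  have := Submodule.eq_top_of_nonempty_interior' _ (Set.nonempty_iff_ne_empty.2 hne)
  apply hf
  ext v
  have hv : v ∈ LinearMap.ker f.toLinearMap := by rw [this]; trivial
  simpa using hv

/-- Vectors of `E` separating the absolute values of inequivalent coordinates are dense, being a
finite intersection of complements of proper hyperplanes. -/
lemma dense_generic {n : ℕ} (E : Submodule ℝ (Fin n → ℝ)) :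
    Dense {v : E | ∀ i j, |v.1 i| = |v.1 j| →
      Quotient.mk (signSetoid E) i = Quotient.mk (signSetoid E) j} := by
  let p : Fin n → E →L[ℝ] ℝ := fun i => (ContinuousLinearMap.proj i).comp E.subtypeL
  let I := {x : Fin n × Fin n //
    Quotient.mk (signSetoid E) x.1 ≠ Quotient.mk (signSetoid E) x.2}
  have hd : ∀ x : I, p x.1.1 - p x.1.2 ≠ 0 ∧ p x.1.1 + p x.1.2 ≠ 0 := by
    rintro ⟨⟨i, j⟩, hij⟩
    constructor
    · intro h
      refine hij (Quotient.sound (Or.inl fun v hv => ?_))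
      have := DFunLike.congr_fun h (⟨v, hv⟩ : E)
      exact sub_eq_zero.1 this
    · intro h
      refine hij (Quotient.sound (Or.inr fun v hv => ?_))
      have := DFunLike.congr_fun h (⟨v, hv⟩ : E)
      exact eq_neg_of_add_eq_zero_left this
  have hD : Dense (⋂ x : I, {v : E | (p x.1.1 - p x.1.2) v ≠ 0} ∩
      {v : E | (p x.1.1 + p x.1.2) v ≠ 0}) := by
    apply dense_iInter_of_isOpen
    · intro x
      exact (isOpen_dense_ker_compl _ (hd x).1).1.inter (isOpen_dense_ker_compl _ (hd x).2).1
    · intro x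
      exact (isOpen_dense_ker_compl _ (hd x).1).2.inter_of_isOpen_left
        (isOpen_dense_ker_compl _ (hd x).2).2 (isOpen_dense_ker_compl _ (hd x).1).1
  refine hD.mono ?_
  intro v hv i j hij
  by_contra hne
  have hx := Set.mem_iInter.1 hv ⟨(i, j), hne⟩
  rcases abs_eq_abs.1 hij with h | h
  · exact hx.1 (sub_eq_zero.2 h)
  · exact hx.2 (add_eq_zero_iff_eq_neg.2 h)

open Classical in
/-- The classes with at least `k` elements separate the points of `E`. -/
lemma exists_large_class {k n : ℕ} (hk : 1 ≤ k) (E : Submodule ℝ (Fin n → ℝ))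
    (hE : ∀ v ∈ E, ∃ s : Finset (Fin n), s.card = k ∧ ∀ i ∈ s, |v i| = ‖v‖)
    (u : Fin n → ℝ) (hu : u ∈ E) (hu0 : u ≠ 0) :
    ∃ i, u i ≠ 0 ∧ k ≤ (Finset.univ.filter fun j =>
      Quotient.mk (signSetoid E) j = Quotient.mk (signSetoid E) i).card := by
  have hpos : 0 < ‖u‖ := norm_pos_iff.2 hu0
  obtain ⟨v, hv, hdist⟩ := (dense_generic E).exists_dist_lt ⟨u, hu⟩ (half_pos hpos)
  have hdist' : ‖u - v.1‖ < ‖u‖ / 2 := by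
    rw [dist_eq_norm] at hdist
    exact hdist
  obtain ⟨s, hs, hsv⟩ := hE v.1 v.2
  obtain ⟨i, hi⟩ := Finset.card_pos.1 (by omega : 0 < s.card)
  refine ⟨i, ?_, ?_⟩
  · -- If `u i = 0`, then `|v i|` is below `‖u‖ / 2`, while `‖v‖` is above it.
    intro h0
    have h1 : ‖(u - v.1) i‖ ≤ ‖u - v.1‖ := norm_le_pi_norm _ i
    rw [Pi.sub_apply, h0, zero_sub, norm_neg, Real.norm_eq_abs, hsv i hi] at h1
    have h2 := norm_sub_norm_le u v.1
    linarith
  · rw [← hs]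
    refine Finset.card_le_card fun j hj => ?_
    simp only [Finset.mem_filter, Finset.mem_univ, true_and]
    exact hv j i ((hsv j hj).trans (hsv i hi).symm)

/-- **Lemma (sup-norm rigidity: existence of an adapted basis).**
Let `k ∣ n`, `k ≥ 1`, and let `E ⊆ ℝⁿ` be a subspace with `dim E = n/k` such that every
`v ∈ E` attains its supremum norm in at least `k` distinct coordinates. Then there are a
partition `J₁,…,J_{n/k}` of the coordinates into sets of size `k` and a basis
`v¹,…,v^{n/k}` of `E` with `|vⁱ_j| = 1` for `j ∈ Jᵢ` and `vⁱ_j = 0` otherwise.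
Here `Fin n → ℝ` carries the sup norm `‖v‖ = max_i |v i|`. -/
theorem adapted_basis_of_sup_norm_rigidity
    (k n : ℕ) (hk : 1 ≤ k) (hdvd : k ∣ n) (E : Submodule ℝ (Fin n → ℝ))
    (hdim : Module.finrank ℝ E = n / k)
    (hE : ∀ v ∈ E, ∃ s : Finset (Fin n), s.card = k ∧ ∀ i ∈ s, |v i| = ‖v‖) :
    ∃ (J : Fin (n / k) → Finset (Fin n)) (v : Fin (n / k) → (Fin n → ℝ)),
      (∀ i, (J i).card = k) ∧
      (∀ i i', i ≠ i' → Disjoint (J i) (J i')) ∧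
      (Finset.univ.biUnion J = Finset.univ) ∧
      (∀ i, v i ∈ E) ∧ LinearIndependent ℝ v ∧
      Submodule.span ℝ (Set.range v) = E ∧
      (∀ i j, (j ∈ J i → |v i j| = 1) ∧ (j ∉ J i → v i j = 0)) := by
  classical
  let C : Quotient (signSetoid E) → Finset (Fin n) := fun q =>
    Finset.univ.filter fun j => Quotient.mk (signSetoid E) j = q
  have hC : ∀ q j, j ∈ C q ↔ Quotient.mk (signSetoid E) j = q := fun q j => by simp [C]
  have hCdisj : ∀ q q', q ≠ q' → Disjoint (C q) (C q') := by
    intro q q' hne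
    refine Finset.disjoint_left.2 fun j hj hj' => hne ?_
    rw [← (hC q j).1 hj, (hC q' j).1 hj']
  let T := {q : Quotient (signSetoid E) // k ≤ (C q).card}
  have habs : ∀ (q : Quotient (signSetoid E)) (j : Fin n), j ∈ C q → ∀ v ∈ E,
      |v j| = |v q.out| := fun q j hj v hv =>
    abs_eq_of_mk_eq (((hC q j).1 hj).trans q.out_eq.symm) hv
  let F : E →ₗ[ℝ] (T → ℝ) := LinearMap.pi fun t =>
    (LinearMap.proj t.1.out).comp E.subtype
  have hF : ∀ v t, F v t = v.1 t.1.out := fun v t => rfl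
  have hinj : Function.Injective F := by
    rw [← LinearMap.ker_eq_bot, LinearMap.ker_eq_bot']
    intro u hu
    by_contra hne
    obtain ⟨i, hi, hcard⟩ := exists_large_class hk E hE u.1 u.2
      (fun h => hne (Subtype.ext h))
    have h1 := habs (Quotient.mk _ i) i ((hC _ _).2 rfl) u.1 u.2
    have h2 := congrFun hu ⟨Quotient.mk _ i, hcard⟩
    rw [hF] at h2
    rw [h2] at h1
    exact hi (by simpa using h1)
  have hle : n / k ≤ Fintype.card T := by
    have := LinearMap.finrank_le_finrank_of_injective hinj
    rwa [hdim, Module.finrank_fintype_fun_eq_card] at this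
  have hkm : n / k * k = n := Nat.div_mul_cancel hdvd
  have hdisj : ((Finset.univ : Finset T) : Set T).PairwiseDisjoint (fun t => C t.1) :=
    fun t _ t' _ hne => hCdisj _ _ fun h => hne (Subtype.ext h)
  have hsum : ∑ t : T, (C t.1).card ≤ n := by
    rw [← Finset.card_biUnion hdisj]
    simpa using Finset.card_le_univ (Finset.univ.biUnion fun t : T => C t.1)
  have hconst : ∑ _t : T, k = Fintype.card T * k := by simp
  have hge : ∑ _t : T, k ≤ ∑ t : T, (C t.1).card := Finset.sum_le_sum fun t _ => t.2
  have hcard : Fintype.card T = n / k :=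
    le_antisymm (Nat.le_of_mul_le_mul_right (by omega) hk) hle
  rw [hcard] at hconst
  have hCk : ∀ t : T, k = (C t.1).card := fun t =>
    (Finset.sum_eq_sum_iff_of_le fun t _ => t.2).1 (by omega) t (Finset.mem_univ t)
  have hcover : (Finset.univ.biUnion fun t : T => C t.1) = Finset.univ := by
    rw [← Finset.card_eq_iff_eq_univ, Finset.card_biUnion hdisj, Fintype.card_fin]
    omega
  let e : Fin (n / k) ≃ T := (Fintype.equivFinOfCardEq hcard).symm
  have hfr : Module.finrank ℝ E = Module.finrank ℝ (T → ℝ) := by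
    rw [hdim, Module.finrank_fintype_fun_eq_card, hcard]
  let L : E ≃ₗ[ℝ] (T → ℝ) := LinearEquiv.ofInjectiveOfFinrankEq F hinj hfr
  have hL : ∀ v, L v = F v := fun v => rfl
  let b : Module.Basis (Fin (n / k)) ℝ E :=
    ((Pi.basisFun ℝ T).map L.symm).reindex e.symm
  have hb : ∀ i t, (b i).1 t.1.out = if t = e i then 1 else 0 := by
    intro i t
    rw [← hF, ← hL]
    simp [b, Pi.single_apply]
  refine ⟨fun i => C (e i).1, fun i => (b i).1, fun i => (hCk _).symm, ?_, ?_,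
    fun i => (b i).2, ?_, ?_, ?_⟩
  · exact fun i i' hne => hCdisj _ _ fun h => hne (e.injective (Subtype.ext h))
  · ext j
    have hj : j ∈ Finset.univ.biUnion fun t : T => C t.1 := by rw [hcover]; simp
    obtain ⟨t, -, ht⟩ := Finset.mem_biUnion.1 hj
    simp only [Finset.mem_biUnion, Finset.mem_univ, true_and, iff_true]
    exact ⟨e.symm t, by simpa using ht⟩
  · exact b.linearIndependent.map' E.subtype E.ker_subtype
  · have := congrArg (Submodule.map E.subtype) b.span_eq
    rw [Submodule.map_span, Submodule.map_top, Submodule.range_subtype, ← Set.range_comp] at this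
    exact this
  · intro i j
    have hj : j ∈ Finset.univ.biUnion fun t : T => C t.1 := by rw [hcover]; simp
    obtain ⟨t, -, ht⟩ := Finset.mem_biUnion.1 hj
    have h1 := habs t.1 j ht (b i).1 (b i).2
    rw [hb] at h1
    constructor
    · intro hji
      have : t = e i := by
        by_contra hne
        exact Finset.disjoint_left.1 (hCdisj _ _ fun h => hne (Subtype.ext h)) ht hji
      simpa [this] using h1
    · intro hji
      have : t ≠ e i := by
        rintro rfl
        exact hji ht
      simpa [this] using h1
end

section
/- Let A:ℝ^m→ℝ^m be a linear map such that ‖Av‖_∞ = ‖v‖_∞ for all v∈ℝ^m, where ‖·‖_∞ is the supremum norm. Then the entrywise absolute value |A| = (|a_{ij}|)_{i,j=1,…,m} of the matrix of A is a permutation matrix. -/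
/-!
Write `a i j = (A e_j) i`. Each column `A e_j` has sup norm `1`, so some entry `a (s j) j` has
absolute value `1` (`exists_abs_entry_eq_one`). For `j ≠ k` the vectors `e_j ± e_k` also have sup
norm `1`, so `|a i j| + |a i k| ≤ 1` in every row `i` (`abs_entry_add_abs_entry_le_one`). Hence
the entry `a (s j) j` is the only nonzero one in its row. So `s` is injective, and therefore
bijective by finiteness: every row is of this form, and `s` is the required permutation.
-/

theorem exists_abs_entry_eq_one {m : ℕ} (A : (Fin m → ℝ) →ₗ[ℝ] (Fin m → ℝ))
    (hA : ∀ v : Fin m → ℝ, ‖A v‖ = ‖v‖) (j : Fin m) :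
    ∃ i, |A (Pi.single j 1) i| = 1 := by
  have h1 : ‖A (Pi.single j 1)‖ = 1 := by rw [hA, Pi.norm_single, norm_one]
  by_contra! hne
  have hlt : ‖A (Pi.single j 1)‖ < 1 := by
    refine (pi_norm_lt_iff one_pos).2 fun i => lt_of_le_of_ne ?_ (hne i)
    exact (norm_le_pi_norm (A (Pi.single j 1)) i).trans h1.le
  exact hlt.ne h1

theorem abs_entry_add_abs_entry_le_one {m : ℕ} (A : (Fin m → ℝ) →ₗ[ℝ] (Fin m → ℝ))
    (hA : ∀ v : Fin m → ℝ, ‖A v‖ = ‖v‖) {j k : Fin m} (hjk : j ≠ k) (i : Fin m) :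
    |A (Pi.single j 1) i| + |A (Pi.single k 1) i| ≤ 1 := by
  have key : ∀ c : ℝ, |c| = 1 →
      |A (Pi.single j 1) i + c * A (Pi.single k 1) i| ≤ 1 := by
    intro c hc
    have hn : ‖(Pi.single j 1 + c • Pi.single k 1 : Fin m → ℝ)‖ ≤ 1 := by
      refine (pi_norm_le_iff_of_nonneg zero_le_one).2 fun l => ?_
      rcases eq_or_ne l j with rfl | hj
      · simp [hjk]
      · rcases eq_or_ne l k with rfl | hk
        · simp [hj, hc]
        · simp [hj, hk]
    have := (norm_le_pi_norm (A (Pi.single j 1 + c • Pi.single k 1)) i).trans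
      ((hA _).trans_le hn)
    simpa using this
  have hp := abs_le.1 (key 1 (by simp))
  have hm := abs_le.1 (key (-1) (by simp))
  -- `|x| + |y| = max |x + y| |x - y|`
  rcases abs_cases (A (Pi.single j 1) i) with h | h <;>
    rcases abs_cases (A (Pi.single k 1) i) with h' | h' <;> linarith [hp.1, hp.2, hm.1, hm.2]


/-- **Lemma (sup-norm isometries have permutation absolute value).**
Let `A : ℝ^m → ℝ^m` be linear with `‖A v‖_∞ = ‖v‖_∞` for all `v`. Then the entrywise
absolute value of the matrix of `A` is a permutation matrix: there is a permutation `σ` with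
`|(A e_j)_i| = 1` if `i = σ j` and `= 0` otherwise.
Here `Fin m → ℝ` carries the sup norm. -/
theorem abs_matrix_of_sup_norm_isometry_is_permutation
    (m : ℕ) (A : (Fin m → ℝ) →ₗ[ℝ] (Fin m → ℝ))
    (hA : ∀ v : Fin m → ℝ, ‖A v‖ = ‖v‖) :
    ∃ σ : Equiv.Perm (Fin m), ∀ i j : Fin m,
      |A (Pi.single j 1) i| = if i = σ j then 1 else 0 := by
  choose s hs using exists_abs_entry_eq_one A hA
  have hzero : ∀ j k, j ≠ k → |A (Pi.single k 1) (s j)| = 0 := fun j k hjk =>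
    le_antisymm (by linarith [abs_entry_add_abs_entry_le_one A hA hjk (s j), hs j]) (abs_nonneg _)
  have hinj : Function.Injective s := by
    intro j k hjk
    by_contra hne
    have h0 := hzero j k hne
    rw [hjk, hs k] at h0
    exact one_ne_zero h0
  refine ⟨Equiv.ofBijective s (Finite.injective_iff_bijective.1 hinj), fun i j => ?_⟩
  obtain ⟨k, rfl⟩ := Finite.surjective_of_injective hinj i
  rw [Equiv.ofBijective_apply]
  split_ifs with h
  · rw [h, hs j]
  · exact hzero k j fun hkj => h (congrArg s hkj)
end
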